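/- Proposition 2.1 (linear growth of moments). Let N ≥ 2 and s > 2. If f_in ≥ 0 belongs to L¹_s(ℝ^N) and f is a solution of the spatially homogeneous Boltzmann equation with collision kernel satisfying (H1)-(H2)-(H3) and initial datum f_in, then there exists a constant C₀(s) > 0, depending only on N, γ, the collision kernel, the mass ∫ f_in and the norm ‖f_in‖_{L¹_s}, such that ‖f(t,·)‖_{L¹_s} ≤ C₀(s)(1+t) for all t ≥ 0. -/

import Mathlib

/-!
The moment `m(t) = ∫ f(t, v) (1 + |v|²) ^ p dv`, with `p = s / 2 > 1`, grows at most linearly because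
its time derivative, the gain minus the loss in the weak form of the equation, is bounded by a
constant depending only on the kernel, the mass and the initial moment.

Weak form. The measure `dv dw dσ` is invariant under the collision map (`I3_collision`): in the
variables centre of mass, modulus and direction of the relative velocity, a collision exchanges
the direction with `σ`. Polar coordinates use the abstract surface measure of the sphere, which is
proportional to the Hausdorff measure by uniqueness of rotation-invariant measures. Once `b` has been
replaced by a Borel function (`exists_borel_kernel`), this gives `weak_form`, an identity between
integrals of nonnegative functions. It yields a finite moment at every time: for the truncated
weights `min (1 + |v|²) n ^ p` the gain is bounded by a multiple of the truncated moment, and the Gronwall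
lemma `gronwall_bdd` gives a bound uniform in `n` (`moment_exp`).

Moment inequality. With `A = 1 + |v|²` and `C = 1 + |w|²`, a collision splits `A + C` into two parts.
The sum of the `p`-th powers of the parts is at most `A ^ p + C ^ p` plus cross terms of lower order,
and there is in addition a strict decrease of order `(A + C) ^ p` if both parts are a fixed
fraction of the whole. The latter holds for `σ` almost orthogonal to `v + w`, a set carrying at
least the fraction `1 / N` of the sphere (`povzner_wt`, `sphMeas_slab`). Integrated against the kernel
and symmetrized (`sym_ineq`), the decrease dissipates the moment of weight `(1 + |v|) ^ γ A ^ p`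
(`slab_ge`), of order `2 p + γ`; the coefficient involves the mass weighted by `(1 + |w|) ^ γ`, bounded
from below through mass and energy (`low_weight`). The cross terms `A ^ (p - 1) C` and `A C ^ (p - 1)`
integrate to the energy times the moment of order `2 p - 2`, so that `-2 < γ` lets the dissipation
absorb them up to a constant (`interpolate`). This is `key_estimate`; integration in time, with
subtraction of the finite loss term, gives the theorem. Zero mass and a null surface measure are treated apart.
-/

open MeasureTheory Real RealInnerProductSpace ENNReal

noncomputable section

/-- Euclidean space `ℝ^N`. -/
abbrev Rn (N : ℕ) := EuclideanSpace ℝ (Fin N)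

/-- Surface measure on the unit sphere `S^{N-1} ⊂ ℝ^N`: the `(N-1)`-dimensional
Hausdorff measure restricted to the sphere. -/
def sphMeas (N : ℕ) : Measure (Rn N) :=
  (μH[(N : ℝ) - 1]).restrict (Metric.sphere (0 : Rn N) 1)

/-- Post-collisional velocity `v' = (v+v_*)/2 + (|v-v_*|/2) σ`. -/
def vP (N : ℕ) (v w σ : Rn N) : Rn N :=
  (2:ℝ)⁻¹ • (v + w) + (‖v - w‖ / 2) • σ

/-- Post-collisional velocity `v'_* = (v+v_*)/2 - (|v-v_*|/2) σ`. -/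
def vSP (N : ℕ) (v w σ : Rn N) : Rn N :=
  (2:ℝ)⁻¹ • (v + w) - (‖v - w‖ / 2) • σ

/-- Cosine of the deviation angle: `cos θ = σ · (v - v_*)/|v - v_*|`. -/
def cosTheta (N : ℕ) (v w σ : Rn N) : ℝ := ⟪σ, v - w⟫ / ‖v - w‖

/-- The Boltzmann collision operator `Q(g,f)` for a kernel `B = Φ(|v-v_*|) b(cos θ)`. -/
def Qop (N : ℕ) (Φ b : ℝ → ℝ) (g f : Rn N → ℝ) (v : Rn N) : ℝ :=
  ∫ w : Rn N, ∫ σ : Rn N,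
    Φ ‖v - w‖ * b (cosTheta N v w σ) *
      (g (vSP N v w σ) * f (vP N v w σ) - g w * f v) ∂(sphMeas N)

/-- Weighted norm `‖f‖_{L¹_s} = ∫ |f(v)| (1+|v|²)^{s/2} dv`, valued in `[0,∞]`. -/
def L1s (N : ℕ) (s : ℝ) (f : Rn N → ℝ) : ℝ≥0∞ :=
  ∫⁻ v : Rn N, ENNReal.ofReal (|f v| * (1 + ‖v‖ ^ 2) ^ (s / 2))

/-- Weighted norm `‖f‖_{L²_s} = (∫ |f(v)|² (1+|v|²)^s dv)^{1/2}`, valued in `[0,∞]`. -/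
def L2s (N : ℕ) (s : ℝ) (f : Rn N → ℝ) : ℝ≥0∞ :=
  (∫⁻ v : Rn N, ENNReal.ofReal (|f v| ^ 2 * (1 + ‖v‖ ^ 2) ^ s)) ^ (1/2 : ℝ)

/-- Assumptions (H1)-(H2)-(H3) on the collision kernel `B = Φ(|v-v_*|) b(cos θ)`. -/
structure KernelOK (N : ℕ) (Φ b : ℝ → ℝ) (γ : ℝ) : Prop where
  gamma_mem : γ ∈ Set.Ioc (-2 : ℝ) 0
  phi_smooth : ContDiff ℝ (⊤ : ℕ∞) Φ
  phi_bounds : ∃ cΦ CΦ : ℝ, 0 < cΦ ∧ 0 < CΦ ∧ ∀ z : Rn N,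
    cΦ * (1 + ‖z‖) ^ γ ≤ Φ ‖z‖ ∧ Φ ‖z‖ ≤ CΦ * (1 + ‖z‖) ^ γ
  phi_deriv_bounds : ∀ p : ℕ, 0 < p → ∃ C : ℝ, ∀ r : ℝ, |iteratedDeriv p Φ r| ≤ C
  b_pos : ∃ b₀ : ℝ, 0 < b₀ ∧ ∀ x : ℝ, b₀ ≤ b x
  b_integrable : ∀ u : Rn N, ‖u‖ = 1 →
    Integrable (fun σ : Rn N => b ⟪u, σ⟫) (sphMeas N)

/-- A solution of the spatially homogeneous Boltzmann equation with initial datum `f_in`: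
nonnegative, measurable, in `L¹_2` at each time, satisfying the Duhamel (integrated) form of
the equation, and conserving mass, momentum and energy. -/
structure IsSolution (N : ℕ) (Φ b : ℝ → ℝ) (f : ℝ → Rn N → ℝ) (fIn : Rn N → ℝ) : Prop where
  nonneg : ∀ t v, 0 ≤ f t v
  meas : Measurable (Function.uncurry f)
  mem_L1_2 : ∀ t : ℝ, 0 ≤ t → L1s N 2 (f t) < ⊤
  eqn : ∀ t : ℝ, 0 ≤ t → ∀ v : Rn N,
    f t v = fIn v + ∫ τ in Set.Ioc (0:ℝ) t, Qop N Φ b (f τ) (f τ) v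
  mass : ∀ t : ℝ, 0 ≤ t → ∫ v : Rn N, f t v = ∫ v : Rn N, fIn v
  momentum : ∀ t : ℝ, 0 ≤ t → ∀ i : Fin N,
    ∫ v : Rn N, f t v * v i = ∫ v : Rn N, fIn v * v i
  energy : ∀ t : ℝ, 0 ≤ t →
    ∫ v : Rn N, f t v * ‖v‖ ^ 2 = ∫ v : Rn N, fIn v * ‖v‖ ^ 2


/-! ### Rotation-invariant measures on the sphere -/

/-- Invariance of a measure on `ℝ^N` under all linear isometries. -/
def RotInv (N : ℕ) (μ : Measure (Rn N)) : Prop :=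
  ∀ L : Rn N ≃ₗᵢ[ℝ] Rn N, MeasurePreserving L μ μ

lemma exists_rot (N : ℕ) (u v : Rn N) (h : ‖u‖ = ‖v‖) : ∃ L : Rn N ≃ₗᵢ[ℝ] Rn N, L u = v :=
  ⟨_, Submodule.reflection_sub h⟩

lemma RotInv.charFun_eq {N : ℕ} {μ : Measure (Rn N)} (h : RotInv N μ) (s t : Rn N)
    (hst : ‖s‖ = ‖t‖) : charFun μ s = charFun μ t := by
  obtain ⟨L, rfl⟩ := exists_rot N s t hst
  have := (h L).integral_comp L.toHomeomorph.measurableEmbedding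
    (fun x => Complex.exp (((⟪x, L s⟫ : ℝ) : ℂ) * Complex.I))
  rw [charFun_apply, charFun_apply, ← this]
  simp

/-- Rotation-invariant finite measures on the unit sphere are proportional: averaging the
characteristic function of either one against the other gives the same double integral. -/
lemma RotInv.unique {N : ℕ} {μ ν : Measure (Rn N)} [IsFiniteMeasure μ] [IsFiniteMeasure ν]
    (hμ : RotInv N μ) (hν : RotInv N ν) (hμ1 : ∀ᵐ x ∂μ, ‖x‖ = 1) (hν1 : ∀ᵐ x ∂ν, ‖x‖ = 1) :
    μ Set.univ • ν = ν Set.univ • μ := by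
  have key : ∀ t : Rn N, (μ.real Set.univ : ℂ) * charFun ν t = ν.real Set.univ * charFun μ t := by
    intro t
    have h1 : ∀ {α β : Measure (Rn N)} [IsFiniteMeasure α] [IsFiniteMeasure β], RotInv N β →
        (∀ᵐ x ∂α, ‖x‖ = 1) →
        ∫ x, ∫ y, Complex.exp (((‖t‖ * ⟪y, x⟫ : ℝ) : ℂ) * Complex.I) ∂β ∂α
          = (α.real Set.univ : ℂ) * charFun β t := by
      intro α β _ _ hβ hα
      have : ∀ᵐ x ∂α, ∫ y, Complex.exp (((‖t‖ * ⟪y, x⟫ : ℝ) : ℂ) * Complex.I) ∂β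
          = charFun β t := by
        filter_upwards [hα] with x hx
        rw [← hβ.charFun_eq (‖t‖ • x) t (by simp [norm_smul, hx]), charFun_apply]
        simp [inner_smul_right]
      rw [integral_congr_ae this]
      simp [measureReal_def]
    rw [← h1 hν hμ1, ← h1 hμ hν1, integral_integral_swap]
    · simp_rw [real_inner_comm]
    · refine Integrable.of_bound (C := 1) (by
        apply Continuous.aestronglyMeasurable
        unfold Function.uncurry
        fun_prop) (Filter.Eventually.of_forall fun p => ?_)
      simp only [Function.uncurry]
      rw [Complex.norm_exp_ofReal_mul_I]
  have h0 : μ Set.univ ≠ ⊤ := measure_ne_top _ _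
  have h0' : ν Set.univ ≠ ⊤ := measure_ne_top _ _
  have : IsFiniteMeasure (μ Set.univ • ν) := Measure.smul_finite _ h0
  have : IsFiniteMeasure (ν Set.univ • μ) := Measure.smul_finite _ h0'
  refine Measure.ext_of_charFun (funext fun t => ?_)
  have := key t
  rw [charFun_apply, charFun_apply, integral_smul_measure, integral_smul_measure,
    ← charFun_apply, ← charFun_apply, Complex.real_smul, Complex.real_smul]
  simpa [measureReal_def] using this

/-- The polar-coordinate surface measure on the unit sphere, as a measure on `ℝ^N`. -/
def polMeas (N : ℕ) : Measure (Rn N) :=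
  ((volume : Measure (Rn N)).toSphere).map Subtype.val

instance (N : ℕ) : IsFiniteMeasure (polMeas N) := by unfold polMeas; infer_instance

lemma polMeas_norm (N : ℕ) : ∀ᵐ x ∂(polMeas N), ‖x‖ = 1 := by
  unfold polMeas
  rw [ae_map_iff (by fun_prop) (measurableSet_eq_fun (by fun_prop) (by fun_prop))]
  exact Filter.Eventually.of_forall fun x => by simp

lemma sphMeas_norm (N : ℕ) : ∀ᵐ x ∂(sphMeas N), ‖x‖ = 1 := by
  unfold sphMeas
  filter_upwards [ae_restrict_mem (Metric.isClosed_sphere.measurableSet)] with x hx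
  simpa using hx

open scoped Pointwise in
lemma polMeas_rotInv (N : ℕ) : RotInv N (polMeas N) := by
  intro L
  have hLm : Measurable (L : Rn N → Rn N) := L.continuous.measurable
  refine ⟨hLm, ?_⟩
  ext A hA
  rw [Measure.map_apply hLm hA]
  unfold polMeas
  rw [Measure.map_apply measurable_subtype_coe hA,
    Measure.map_apply measurable_subtype_coe (hLm hA),
    Measure.toSphere_apply' _ (measurable_subtype_coe hA),
    Measure.toSphere_apply' _ (measurable_subtype_coe (hLm hA))]
  congr 1
  have hL : MeasurePreserving L.toMeasurableEquiv (volume : Measure (Rn N)) volume :=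
    L.measurePreserving
  rw [← hL.measure_preimage_equiv (Set.Ioo (0:ℝ) 1 • (Subtype.val '' (Subtype.val ⁻¹' A)))]
  congr 1
  ext x
  simp only [Set.mem_smul, Set.mem_image, Set.mem_preimage, Subtype.exists, mem_sphere_iff_norm,
    sub_zero, exists_and_left, exists_prop, exists_eq_right_right]
  constructor
  · rintro ⟨r, hr, y, ⟨hy, hy1⟩, rfl⟩
    exact ⟨r, hr, L y, ⟨hy, by simpa using hy1⟩, by simp⟩
  · rintro ⟨r, hr, y, ⟨hy, hy1⟩, h⟩
    refine ⟨r, hr, L.symm y, ⟨by simpa using hy, by simpa using hy1⟩, ?_⟩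
    apply L.injective
    simpa using h

lemma sphMeas_rotInv (N : ℕ) : RotInv N (sphMeas N) := by
  intro L
  unfold sphMeas
  have h := (L.toIsometryEquiv.measurePreserving_hausdorffMeasure ((N : ℝ) - 1)).restrict_preimage
    (s := Metric.sphere (0 : Rn N) 1) Metric.isClosed_sphere.measurableSet
  have h2 : (L.toIsometryEquiv : Rn N → Rn N) ⁻¹' Metric.sphere (0 : Rn N) 1
      = Metric.sphere (0 : Rn N) 1 := by
    ext x; simp
  rw [h2] at h
  exact h

lemma sphMeas_finite {N : ℕ} (hN : 2 ≤ N) {Φ b : ℝ → ℝ} {γ : ℝ} (hK : KernelOK N Φ b γ) :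
    IsFiniteMeasure (sphMeas N) := by
  obtain ⟨b0, hb0, hb⟩ := hK.b_pos
  have hi := hK.b_integrable (EuclideanSpace.single ⟨0, by omega⟩ 1) (by simp)
  have : Integrable (fun _ : Rn N => b0) (sphMeas N) :=
    hi.mono' aestronglyMeasurable_const (Filter.Eventually.of_forall fun σ => by
      rw [Real.norm_of_nonneg hb0.le]; exact hb _)
  rcases integrable_const_iff.1 this with h | h
  · exact absurd h hb0.ne'
  · exact h

lemma sphMeas_eq {N : ℕ} (hN : 2 ≤ N) [IsFiniteMeasure (sphMeas N)] :
    ∃ c : ℝ≥0∞, sphMeas N = c • polMeas N := by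
  have h := (polMeas_rotInv N).unique (sphMeas_rotInv N) (polMeas_norm N) (sphMeas_norm N)
  have : Nonempty (Fin N) := ⟨⟨0, by omega⟩⟩
  have h0 : polMeas N Set.univ ≠ 0 := by
    unfold polMeas
    rw [Measure.map_apply measurable_subtype_coe MeasurableSet.univ, Set.preimage_univ,
      Ne, Measure.measure_univ_eq_zero]
    exact Measure.toSphere_ne_zero _
  refine ⟨(polMeas N Set.univ)⁻¹ * sphMeas N Set.univ, ?_⟩
  rw [mul_smul, ← h, smul_smul, ENNReal.inv_mul_cancel h0 (measure_ne_top _ _), one_smul]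

lemma sphMeas_neg (N : ℕ) (F : Rn N → ℝ≥0∞) :
    ∫⁻ σ, F (-σ) ∂(sphMeas N) = ∫⁻ σ, F σ ∂(sphMeas N) := by
  have h := sphMeas_rotInv N (LinearIsometryEquiv.neg ℝ)
  simpa using h.lintegral_comp_emb
    (LinearIsometryEquiv.neg ℝ (E := Rn N)).toHomeomorph.measurableEmbedding F

/-- A slab `{2 (u · σ)² ≤ |u|²}` carries at least the fraction `1/N` of the sphere: by rotation
invariance the measure of a slab depends only on whether `u` vanishes, and the `N` coordinate slabs
cover the sphere, since a unit vector in dimension at least two has a coordinate of square at most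
`1/2`. -/
lemma sphMeas_slab {N : ℕ} (hN : 2 ≤ N) (u : Rn N) :
    sphMeas N Set.univ ≤ N * sphMeas N {σ | 2 * ⟪u, σ⟫ ^ 2 ≤ ‖u‖ ^ 2} := by
  have hm : ∀ w : Rn N, MeasurableSet {σ : Rn N | 2 * ⟪w, σ⟫ ^ 2 ≤ ‖w‖ ^ 2} := fun w =>
    measurableSet_le (by fun_prop) (by fun_prop)
  have hrot : ∀ i : Fin N, sphMeas N {σ | 2 * ⟪‖u‖ • EuclideanSpace.single i (1:ℝ), σ⟫ ^ 2
      ≤ ‖‖u‖ • EuclideanSpace.single i (1:ℝ)‖ ^ 2} = sphMeas N {σ | 2 * ⟪u, σ⟫ ^ 2 ≤ ‖u‖ ^ 2} := by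
    intro i
    obtain ⟨L, hL⟩ := exists_rot N (‖u‖ • EuclideanSpace.single i (1:ℝ)) u (by simp [norm_smul])
    rw [← (sphMeas_rotInv N L).measure_preimage (hm u).nullMeasurableSet]
    congr 1
    ext σ
    simp only [Set.mem_ofPred_eq, Set.mem_preimage]
    have h1 : ⟪u, L σ⟫ = ⟪‖u‖ • EuclideanSpace.single i (1:ℝ), σ⟫ := by
      rw [← L.inner_map_map (‖u‖ • EuclideanSpace.single i (1:ℝ)) σ, hL]
    have h2 : ‖u‖ = ‖‖u‖ • EuclideanSpace.single i (1:ℝ)‖ := by simp [norm_smul]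
    rw [h1, ← h2]
  calc sphMeas N Set.univ
      ≤ sphMeas N (⋃ i : Fin N, {σ | 2 * ⟪‖u‖ • EuclideanSpace.single i (1:ℝ), σ⟫ ^ 2
      ≤ ‖‖u‖ • EuclideanSpace.single i (1:ℝ)‖ ^ 2}) := by
        refine measure_mono_ae ?_
        filter_upwards [sphMeas_norm N] with σ hσ _
        have h1 : ∑ i, (σ i) ^ 2 = 1 := by
          have := EuclideanSpace.real_norm_sq_eq σ
          rw [hσ] at this; linarith
        have : ∃ i : Fin N, 2 * (σ i) ^ 2 ≤ 1 := by
          by_contra hcon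
          push Not at hcon
          have h2 : ∑ i : Fin N, (1:ℝ) ≤ ∑ i, 2 * (σ i) ^ 2 :=
            Finset.sum_le_sum fun i _ => (hcon i).le
          have : Nonempty (Fin N) := ⟨⟨0, by omega⟩⟩
          have h2 : ∑ i : Fin N, (1:ℝ) < ∑ i, 2 * (σ i) ^ 2 :=
            Finset.sum_lt_sum_of_nonempty Finset.univ_nonempty fun i _ => hcon i
          rw [← Finset.mul_sum, h1] at h2
          simp at h2
          have : (2:ℝ) ≤ N := by exact_mod_cast hN
          linarith
        obtain ⟨i, hi⟩ := this
        refine Set.mem_iUnion.2 ⟨i, ?_⟩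
        simp only [Set.mem_ofPred_eq, inner_smul_left, norm_smul, EuclideanSpace.inner_single_left]
        simp
        nlinarith [sq_nonneg ‖u‖]
    _ ≤ ∑' i : Fin N, sphMeas N {σ | 2 * ⟪‖u‖ • EuclideanSpace.single i (1:ℝ), σ⟫ ^ 2
      ≤ ‖‖u‖ • EuclideanSpace.single i (1:ℝ)‖ ^ 2} := measure_iUnion_le _
    _ = N * sphMeas N {σ | 2 * ⟪u, σ⟫ ^ 2 ≤ ‖u‖ ^ 2} := by
        simp_rw [hrot]
        simp


/-! ### Invariance of the measure under collisions -/

lemma lintegral_polar {N : ℕ} (hN : 2 ≤ N) (h : Rn N → ℝ≥0∞) (hh : Measurable h) :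
    ∫⁻ u : Rn N, h u = ∫⁻ ω : Metric.sphere (0 : Rn N) 1, ∫⁻ r : Set.Ioi (0:ℝ), h (r.1 • ω.1)
      ∂(Measure.volumeIoiPow (Module.finrank ℝ (Rn N) - 1)) ∂((volume : Measure (Rn N)).toSphere) := by
  have : Nonempty (Fin N) := ⟨⟨0, by omega⟩⟩
  have hp := (volume : Measure (Rn N)).measurePreserving_homeomorphUnitSphereProd
  have h1 := hp.lintegral_comp_emb (homeomorphUnitSphereProd (Rn N)).measurableEmbedding
    (fun p => h (p.2.1 • p.1.1))
  rw [lintegral_prod _ (by fun_prop)] at h1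
  rw [← h1, ← lintegral_add_compl h (measurableSet_singleton (0 : Rn N)),
    ← lintegral_subtype_comap (measurableSet_singleton (0 : Rn N)).compl]
  simp only [Measure.restrict_singleton, measure_singleton, zero_smul, lintegral_zero_measure,
    zero_add]
  refine lintegral_congr fun x => ?_
  have : h x.1 = h (((homeomorphUnitSphereProd (Rn N)).symm
    (homeomorphUnitSphereProd (Rn N) x)).1) := by simp
  rw [this, homeomorphUnitSphereProd_symm_apply_coe]

/-- In polar coordinates for the relative velocity `u`, the collision exchanges the direction
of `u` with `σ`; the measure `du dσ` is invariant because `sphMeas` is a multiple of the polar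
surface measure. -/
lemma polar_swap {N : ℕ} (hN : 2 ≤ N) [IsFiniteMeasure (sphMeas N)]
    (H : Rn N → Rn N → ℝ≥0∞) (hH : Measurable (Function.uncurry H)) :
    ∫⁻ u : Rn N, ∫⁻ σ, H u σ ∂(sphMeas N)
      = ∫⁻ u : Rn N, ∫⁻ σ, H (‖u‖ • σ) (‖u‖⁻¹ • u) ∂(sphMeas N) := by
  obtain ⟨c, hc⟩ := sphMeas_eq hN
  have hH' : ∀ {α : Type} [MeasurableSpace α] {f g : α → Rn N}, Measurable f → Measurable g →
      Measurable fun a => H (f a) (g a) := fun hf hg => hH.comp (hf.prodMk hg)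
  have hS : ∀ g : Rn N → ℝ≥0∞, Measurable g → ∫⁻ σ, g σ ∂(sphMeas N)
      = c * ∫⁻ ω : Metric.sphere (0 : Rn N) 1, g ω.1 ∂((volume : Measure (Rn N)).toSphere) := by
    intro g hg
    rw [hc, lintegral_smul_measure, polMeas, lintegral_map hg measurable_subtype_coe, smul_eq_mul]
  have e1 : ∀ u : Rn N, ∫⁻ σ, H u σ ∂(sphMeas N) = _ := fun u =>
    hS _ (hH' measurable_const measurable_id)
  have e2 : ∀ u : Rn N, ∫⁻ σ, H (‖u‖ • σ) (‖u‖⁻¹ • u) ∂(sphMeas N) = _ := fun u =>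
    hS _ (hH' (by fun_prop) measurable_const)
  simp_rw [e1, e2]
  have m1 : Measurable fun u : Rn N => ∫⁻ ω : Metric.sphere (0 : Rn N) 1, H u ω.1
      ∂((volume : Measure (Rn N)).toSphere) :=
    Measurable.lintegral_prod_right' (f := fun p : Rn N × Metric.sphere (0 : Rn N) 1 => H p.1 p.2.1)
      (hH' (by fun_prop) (by fun_prop))
  have m2 : Measurable fun u : Rn N => ∫⁻ ω : Metric.sphere (0 : Rn N) 1, H (‖u‖ • ω.1) (‖u‖⁻¹ • u)
      ∂((volume : Measure (Rn N)).toSphere) :=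
    Measurable.lintegral_prod_right' (f := fun p : Rn N × Metric.sphere (0 : Rn N) 1 =>
      H (‖p.1‖ • p.2.1) (‖p.1‖⁻¹ • p.1)) (hH' (by fun_prop) (by fun_prop))
  rw [lintegral_const_mul _ m1, lintegral_const_mul _ m2, lintegral_polar hN _ m1,
    lintegral_polar hN _ m2]
  congr 1
  have e3 : ∀ (ω : Metric.sphere (0 : Rn N) 1) (r : Set.Ioi (0:ℝ)),
      ‖r.1 • ω.1‖ = r.1 ∧ ‖r.1 • ω.1‖⁻¹ • (r.1 • ω.1) = ω.1 := by
    intro ω r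
    have h1 : ‖r.1 • ω.1‖ = r.1 := by
      rw [norm_smul, norm_eq_of_mem_sphere, mul_one, Real.norm_of_nonneg (le_of_lt r.2)]
    exact ⟨h1, by rw [h1, inv_smul_smul₀ (ne_of_gt r.2)]⟩
  simp_rw [fun ω r => (e3 ω r).2, fun ω r => (e3 ω r).1]
  -- both sides become integrals over `(ω, r, ω')`; they differ by the order of `ω` and `ω'`
  have sw : ∀ F : Metric.sphere (0 : Rn N) 1 → Set.Ioi (0:ℝ) → Metric.sphere (0 : Rn N) 1 → ℝ≥0∞,
      Measurable (fun p : Metric.sphere (0 : Rn N) 1 × Set.Ioi (0:ℝ) × Metric.sphere (0 : Rn N) 1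
        => F p.1 p.2.1 p.2.2) →
      ∫⁻ ω, ∫⁻ r, ∫⁻ ω', F ω r ω' ∂((volume : Measure (Rn N)).toSphere)
        ∂(Measure.volumeIoiPow (Module.finrank ℝ (Rn N) - 1)) ∂((volume : Measure (Rn N)).toSphere)
      = ∫⁻ ω', ∫⁻ ω, ∫⁻ r, F ω r ω' ∂(Measure.volumeIoiPow (Module.finrank ℝ (Rn N) - 1))
        ∂((volume : Measure (Rn N)).toSphere) ∂((volume : Measure (Rn N)).toSphere) := by
    intro F hF
    have : ∀ ω, ∫⁻ r, ∫⁻ ω', F ω r ω' ∂((volume : Measure (Rn N)).toSphere)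
        ∂(Measure.volumeIoiPow (Module.finrank ℝ (Rn N) - 1)) = ∫⁻ ω', ∫⁻ r, F ω r ω'
        ∂(Measure.volumeIoiPow (Module.finrank ℝ (Rn N) - 1))
        ∂((volume : Measure (Rn N)).toSphere) := fun ω =>
      lintegral_lintegral_swap (hF.comp (measurable_const.prodMk measurable_id)).aemeasurable
    simp_rw [this]
    refine lintegral_lintegral_swap (Measurable.aemeasurable ?_)
    exact Measurable.lintegral_prod_right' (f := fun p : (Metric.sphere (0 : Rn N) 1 ×
      Metric.sphere (0 : Rn N) 1) × Set.Ioi (0:ℝ) => F p.1.1 p.2 p.1.2)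
      (hF.comp (f := fun q : (Metric.sphere (0 : Rn N) 1 × Metric.sphere (0 : Rn N) 1) ×
        Set.Ioi (0:ℝ) => (q.1.1, q.2, q.1.2)) (by fun_prop))
  rw [sw _ (hH' (by fun_prop) (by fun_prop))]
  refine lintegral_congr fun ω => ?_
  exact lintegral_lintegral_swap (hH' (f := fun p : Metric.sphere (0 : Rn N) 1 × Set.Ioi (0:ℝ) =>
    p.2.1 • p.1.1) (by fun_prop) (by fun_prop)).aemeasurable

/-- Passage to centre of mass and relative velocity. -/
lemma lintegral_com {N : ℕ} (F : Rn N → Rn N → ℝ≥0∞) (hF : Measurable (Function.uncurry F)) :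
    ∫⁻ v : Rn N, ∫⁻ w : Rn N, F v w
      = ∫⁻ z : Rn N, ∫⁻ u : Rn N, F (z + (2:ℝ)⁻¹ • u) (z - (2:ℝ)⁻¹ • u) := by
  have hF' : ∀ {f g : Rn N × Rn N → Rn N}, Measurable f → Measurable g →
      Measurable fun a => F (f a) (g a) := fun hf hg => hF.comp (hf.prodMk hg)
  rw [lintegral_lintegral_swap hF.aemeasurable]
  have h1 : ∀ w : Rn N, ∫⁻ v : Rn N, F v w = ∫⁻ u : Rn N, F (u + w) w := fun w =>
    (lintegral_add_right_eq_self (fun v => F v w) w).symm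
  simp_rw [h1]
  rw [lintegral_lintegral_swap (f := fun w u => F (u + w) w)
    (hF' (by fun_prop) (by fun_prop)).aemeasurable]
  have h2 : ∀ u : Rn N, ∫⁻ w : Rn N, F (u + w) w
      = ∫⁻ z : Rn N, F (z + (2:ℝ)⁻¹ • u) (z - (2:ℝ)⁻¹ • u) := fun u => by
    rw [← lintegral_sub_right_eq_self (fun w => F (u + w) w) ((2:ℝ)⁻¹ • u)]
    refine lintegral_congr fun z => ?_
    congr 1
    module
  simp_rw [h2]
  rw [lintegral_lintegral_swap (f := fun u z => F (z + (2:ℝ)⁻¹ • u) (z - (2:ℝ)⁻¹ • u))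
    (hF' (by fun_prop) (by fun_prop)).aemeasurable]

/-- The triple integral over `(v, w, σ)` of a nonnegative function. -/
def I3 (N : ℕ) (F : Rn N → Rn N → Rn N → ℝ≥0∞) : ℝ≥0∞ :=
  ∫⁻ v, ∫⁻ w, ∫⁻ σ, F v w σ ∂(sphMeas N)

/-- Invariance of `dv dw dσ` under `(v, w, σ) ↦ (v', w', (v - w)/|v - w|)`. -/
lemma I3_collision {N : ℕ} (hN : 2 ≤ N) [IsFiniteMeasure (sphMeas N)]
    (F : Rn N → Rn N → Rn N → ℝ≥0∞)
    (hF : Measurable fun p : Rn N × Rn N × Rn N => F p.1 p.2.1 p.2.2) :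
    I3 N F = I3 N fun v w σ => F (vP N v w σ) (vSP N v w σ) (‖v - w‖⁻¹ • (v - w)) := by
  have hF' : ∀ {α : Type} [MeasurableSpace α] {f g h : α → Rn N}, Measurable f → Measurable g →
      Measurable h → Measurable fun a => F (f a) (g a) (h a) :=
    fun hf hg hh => hF.comp (hf.prodMk (hg.prodMk hh))
  unfold I3
  have m : ∀ {G : Rn N → Rn N → Rn N → ℝ≥0∞},
      Measurable (fun p : (Rn N × Rn N) × Rn N => G p.1.1 p.1.2 p.2) →
      Measurable (Function.uncurry fun v w => ∫⁻ σ, G v w σ ∂(sphMeas N)) := fun hG =>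
    Measurable.lintegral_prod_right' hG
  rw [lintegral_com _ (m (hF' (by fun_prop) (by fun_prop) (by fun_prop))),
    lintegral_com (fun v w => ∫⁻ σ, F (vP N v w σ) (vSP N v w σ) (‖v - w‖⁻¹ • (v - w)) ∂(sphMeas N))
      (m (G := fun v w σ => F (vP N v w σ) (vSP N v w σ) (‖v - w‖⁻¹ • (v - w)))
      (hF' (by unfold vP; fun_prop) (by unfold vSP; fun_prop) (by fun_prop)))]
  refine lintegral_congr fun z => ?_
  rw [polar_swap hN (fun u σ => F (z + (2:ℝ)⁻¹ • u) (z - (2:ℝ)⁻¹ • u) σ) (hF' (by fun_prop) (by fun_prop) (by fun_prop))]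
  refine lintegral_congr fun u => lintegral_congr fun σ => ?_
  have e : z + (2:ℝ)⁻¹ • u - (z - (2:ℝ)⁻¹ • u) = u := by module
  have e' : z + (2:ℝ)⁻¹ • u + (z - (2:ℝ)⁻¹ • u) = (2:ℝ) • z := by module
  simp only [vP, vSP, e, e']
  congr 1
  · module
  · module

/-- Symmetry under exchange of the two particles. -/
lemma I3_swap {N : ℕ} [IsFiniteMeasure (sphMeas N)]
    (F : Rn N → Rn N → Rn N → ℝ≥0∞)
    (hF : Measurable fun p : Rn N × Rn N × Rn N => F p.1 p.2.1 p.2.2) :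
    I3 N F = I3 N fun v w σ => F w v (-σ) := by
  unfold I3
  have h : ∀ v w : Rn N, ∫⁻ σ, F w v (-σ) ∂(sphMeas N) = ∫⁻ σ, F w v σ ∂(sphMeas N) := fun v w =>
    sphMeas_neg N (fun σ => F w v σ)
  simp_rw [h]
  refine lintegral_lintegral_swap (Measurable.aemeasurable ?_)
  exact Measurable.lintegral_prod_right'
    (f := fun p : (Rn N × Rn N) × Rn N => F p.1.1 p.1.2 p.2)
    (hF.comp (f := fun q : (Rn N × Rn N) × Rn N => (q.1.1, q.1.2, q.2)) (by fun_prop))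


/-! ### Reduction to a Borel angular kernel -/

/-- The angular kernel `b` may be replaced by a Borel function without changing the collision
operator. Integrability of `σ ↦ b (u · σ)` only makes that composite almost everywhere measurable;
measurability descends along `σ ↦ u · σ` by the separation of disjoint analytic sets. -/
lemma exists_borel_kernel {N : ℕ} (hN : 2 ≤ N) {Φ b : ℝ → ℝ} {γ : ℝ} (hK : KernelOK N Φ b γ) :
    ∃ b' : ℝ → ℝ, Measurable b' ∧ KernelOK N Φ b' γ ∧
      ∀ (g : Rn N → ℝ) (v : Rn N), Qop N Φ b g g v = Qop N Φ b' g g v := by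
  obtain ⟨b0, hb0, hb⟩ := hK.b_pos
  set u0 : Rn N := EuclideanSpace.single ⟨0, by omega⟩ 1 with hu0
  have hu0n : ‖u0‖ = 1 := by simp [hu0]
  have hi := (hK.b_integrable u0 hu0n).1.aemeasurable
  set bad := toMeasurable (sphMeas N) {σ : Rn N | ¬ (b ⟪u0, σ⟫ = hi.mk _ σ)} with hbad
  have hbad0 : sphMeas N bad = 0 := by
    rw [hbad, measure_toMeasurable]; exact hi.ae_eq_mk
  have hE : MeasurableSet badᶜ := (measurableSet_toMeasurable _ _).compl
  have hEeq : ∀ σ ∈ badᶜ, b ⟪u0, σ⟫ = hi.mk _ σ := by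
    intro σ hσ
    by_contra hne
    exact hσ (subset_toMeasurable _ _ hne)
  have : StandardBorelSpace (badᶜ : Set (Rn N)) := hE.standardBorel
  have hg : Measurable (fun σ : (badᶜ : Set (Rn N)) => (⟪u0, σ.1⟫ : ℝ)) := by fun_prop
  have hc : Measurable (b ∘ fun σ : (badᶜ : Set (Rn N)) => (⟪u0, σ.1⟫ : ℝ)) := by
    have : (b ∘ fun σ : (badᶜ : Set (Rn N)) => (⟪u0, σ.1⟫ : ℝ)) = fun σ => hi.mk _ σ.1 :=
      funext fun σ => hEeq σ.1 σ.2
    rw [this]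
    exact hi.measurable_mk.comp measurable_subtype_coe
  obtain ⟨h, hhm, hh⟩ := ((hg.measurable_comp_iff_restrict).1 hc).exists_eq_measurable_comp
  have hae0 : ∀ᵐ σ ∂(sphMeas N), b ⟪u0, σ⟫ = max (h ⟪u0, σ⟫) b0 := by
    have : ∀ᵐ σ ∂(sphMeas N), σ ∈ badᶜ := measure_eq_zero_iff_ae_notMem.1 hbad0
    filter_upwards [this] with σ hσ
    have := congrFun hh ⟨⟪u0, σ⟫, ⟨σ, hσ⟩, rfl⟩
    simp only [Set.domRestrict_apply, Function.comp_apply] at this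
    rw [← this, max_eq_left (hb _)]
  have hae : ∀ u : Rn N, ‖u‖ = 1 → ∀ᵐ σ ∂(sphMeas N), b ⟪u, σ⟫ = max (h ⟪u, σ⟫) b0 := by
    intro u hu
    obtain ⟨L, hL⟩ := exists_rot N u u0 (by rw [hu, hu0n])
    filter_upwards [(sphMeas_rotInv N L).quasiMeasurePreserving.ae hae0] with σ hσ
    rwa [← hL, L.inner_map_map] at hσ
  refine ⟨fun x => max (h x) b0, hhm.max measurable_const, ?_, ?_⟩
  · exact ⟨hK.gamma_mem, hK.phi_smooth, hK.phi_bounds, hK.phi_deriv_bounds,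
      ⟨b0, hb0, fun x => le_max_right _ _⟩,
      fun u hu => (hK.b_integrable u hu).congr (hae u hu)⟩
  · intro g v
    unfold Qop
    congr 1
    funext w
    by_cases hvw : v = w
    · subst hvw
      have : ∀ σ, vSP N v v σ = v ∧ vP N v v σ = v := by
        intro σ
        constructor
        · simp only [vSP, sub_self, norm_zero, zero_div, zero_smul, sub_zero]; module
        · simp only [vP, sub_self, norm_zero, zero_div, zero_smul, add_zero]; module
      simp [fun σ => (this σ).1, fun σ => (this σ).2]
    · have hn : ‖v - w‖ ≠ 0 := by simpa [sub_eq_zero] using hvw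
      refine integral_congr_ae ?_
      filter_upwards [hae (‖v - w‖⁻¹ • (v - w)) (by simp [norm_smul, hn])] with σ hσ
      have : cosTheta N v w σ = ⟪‖v - w‖⁻¹ • (v - w), σ⟫ := by
        rw [cosTheta, inner_smul_left, real_inner_comm]; simp; field_simp
      rw [this, hσ]

lemma IsSolution.congr {N : ℕ} {Φ b b' : ℝ → ℝ} {f : ℝ → Rn N → ℝ} {fIn : Rn N → ℝ}
    (h : ∀ (g : Rn N → ℝ) (v : Rn N), Qop N Φ b g g v = Qop N Φ b' g g v)
    (hf : IsSolution N Φ b f fIn) : IsSolution N Φ b' f fIn :=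
  ⟨hf.nonneg, hf.meas, hf.mem_L1_2, fun t ht v => by simpa only [← h] using hf.eqn t ht v,
    hf.mass, hf.momentum, hf.energy⟩

/-! ### The collision kernel -/

/-- The collision kernel `B(|v - w|, cos θ)` with values in `[0, ∞]`. -/
def kE (N : ℕ) (Φ b : ℝ → ℝ) (v w σ : Rn N) : ℝ≥0∞ :=
  ENNReal.ofReal (Φ ‖v - w‖ * b (cosTheta N v w σ))

lemma kE_meas {N : ℕ} {Φ b : ℝ → ℝ} (hΦ : Measurable Φ) (hb : Measurable b) {α : Type*}
    [MeasurableSpace α] {f g h : α → Rn N} (hf : Measurable f) (hg : Measurable g)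
    (hh : Measurable h) : Measurable fun a => kE N Φ b (f a) (g a) (h a) := by
  unfold kE cosTheta
  fun_prop

lemma cosTheta_swap (N : ℕ) (v w σ : Rn N) : cosTheta N w v (-σ) = cosTheta N v w σ := by
  unfold cosTheta
  rw [norm_sub_rev w v, ← neg_sub v w, inner_neg_neg]

lemma kE_swap (N : ℕ) (Φ b : ℝ → ℝ) (v w σ : Rn N) : kE N Φ b w v (-σ) = kE N Φ b v w σ := by
  unfold kE
  rw [cosTheta_swap, norm_sub_rev w v]

lemma vP_swap (N : ℕ) (v w σ : Rn N) : vP N w v (-σ) = vSP N v w σ := by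
  unfold vP vSP
  rw [norm_sub_rev w v]; module

lemma vP_sub_vSP (N : ℕ) (v w σ : Rn N) : vP N v w σ - vSP N v w σ = ‖v - w‖ • σ := by
  unfold vP vSP
  module

lemma vP_back (N : ℕ) (v w σ : Rn N) (hσ : ‖σ‖ = 1) :
    vP N (vP N v w σ) (vSP N v w σ) (‖v - w‖⁻¹ • (v - w)) = v := by
  have h2 : ‖v - w‖ • (‖v - w‖⁻¹ • (v - w)) = v - w := by
    rcases eq_or_ne (v - w) 0 with h | h
    · simp [h]
    · rw [smul_inv_smul₀ (norm_ne_zero_iff.2 h)]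
  have h1 : vP N v w σ + vSP N v w σ = v + w := by unfold vP vSP; module
  rw [vP, vP_sub_vSP, h1, norm_smul, hσ, mul_one, norm_norm, div_eq_inv_mul, mul_smul, h2]
  module

lemma kE_back (N : ℕ) (Φ b : ℝ → ℝ) (v w σ : Rn N) (hσ : ‖σ‖ = 1) :
    kE N Φ b (vP N v w σ) (vSP N v w σ) (‖v - w‖⁻¹ • (v - w)) = kE N Φ b v w σ := by
  have h0 : ‖vP N v w σ - vSP N v w σ‖ = ‖v - w‖ := by
    rw [vP_sub_vSP, norm_smul, hσ, mul_one, norm_norm]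
  unfold kE cosTheta
  rw [h0, vP_sub_vSP, inner_smul_left, inner_smul_right, real_inner_comm]
  rcases eq_or_ne ‖v - w‖ 0 with h | h
  · have : v - w = 0 := norm_eq_zero.1 h
    simp [this]
  · congr 4
    simp only [map_inv₀, conj_trivial]
    field_simp

lemma gain_change {N : ℕ} (hN : 2 ≤ N) [IsFiniteMeasure (sphMeas N)] {Φ b : ℝ → ℝ}
    (hΦ : Measurable Φ) (hb : Measurable b) {F φ : Rn N → ℝ≥0∞} (hF : Measurable F)
    (hφ : Measurable φ) :
    I3 N (fun v w σ => φ v * (kE N Φ b v w σ * (F (vSP N v w σ) * F (vP N v w σ))))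
      = I3 N (fun v w σ => φ (vP N v w σ) * (kE N Φ b v w σ * (F w * F v))) := by
  rw [I3_collision hN (fun v w σ => φ (vP N v w σ) * (kE N Φ b v w σ * (F w * F v)))]
  · refine lintegral_congr fun v => lintegral_congr fun w => lintegral_congr_ae ?_
    filter_upwards [sphMeas_norm N] with σ hσ
    simp only [vP_back N v w σ hσ, kE_back N Φ b v w σ hσ]
  · have := kE_meas (N := N) hΦ hb (f := fun p : Rn N × Rn N × Rn N => p.1)
      (g := fun p : Rn N × Rn N × Rn N => p.2.1) (h := fun p : Rn N × Rn N × Rn N => p.2.2)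
      (by fun_prop) (by fun_prop) (by fun_prop)
    unfold vP
    fun_prop

/-- An upper bound for the angular integral of `b`; the second summand covers the degenerate
case of equal velocities, in which `cosTheta` takes the junk value `0`. -/
def bBar (N : ℕ) (hN : 2 ≤ N) (b : ℝ → ℝ) : ℝ≥0∞ :=
  ∫⁻ σ : Rn N, ENNReal.ofReal (b ⟪(EuclideanSpace.single ⟨0, by omega⟩ 1 : Rn N), σ⟫) ∂(sphMeas N)
    + ENNReal.ofReal (b 0) * sphMeas N Set.univ

lemma bBar_lt_top {N : ℕ} (hN : 2 ≤ N) [IsFiniteMeasure (sphMeas N)] {Φ b : ℝ → ℝ} {γ : ℝ}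
    (hK : KernelOK N Φ b γ) : bBar N hN b < ⊤ := by
  refine ENNReal.add_lt_top.2 ⟨?_, ENNReal.mul_lt_top ENNReal.ofReal_lt_top (measure_lt_top _ _)⟩
  exact (hK.b_integrable _ (by simp)).lintegral_lt_top

lemma phi_pos {N : ℕ} {Φ b : ℝ → ℝ} {γ : ℝ} (hK : KernelOK N Φ b γ) (z : Rn N) :
    0 ≤ Φ ‖z‖ := by
  obtain ⟨c, C, hc, hC, h⟩ := hK.phi_bounds
  exact le_trans (by positivity) (h z).1

lemma kE_int_le {N : ℕ} (hN : 2 ≤ N) {Φ b : ℝ → ℝ} {γ : ℝ} (hK : KernelOK N Φ b γ)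
    (hbm : Measurable b) (v w : Rn N) :
    ∫⁻ σ, kE N Φ b v w σ ∂(sphMeas N) ≤ ENNReal.ofReal (Φ ‖v - w‖) * bBar N hN b := by
  unfold kE
  simp_rw [ENNReal.ofReal_mul (phi_pos hK (v - w))]
  rw [lintegral_const_mul _ (by unfold cosTheta; fun_prop)]
  gcongr
  unfold bBar
  rcases eq_or_ne v w with h | h
  · subst h
    simp [cosTheta]
  · refine le_trans (le_of_eq ?_) le_self_add
    have hn : ‖v - w‖ ≠ 0 := by simpa [sub_eq_zero] using h
    obtain ⟨L, hL⟩ := exists_rot N (‖v - w‖⁻¹ • (v - w))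
      (EuclideanSpace.single ⟨0, by omega⟩ 1 : Rn N) (by simp [norm_smul, hn])
    rw [← (sphMeas_rotInv N L).lintegral_comp_emb L.toHomeomorph.measurableEmbedding
      (fun σ => ENNReal.ofReal (b ⟪(EuclideanSpace.single ⟨0, by omega⟩ 1 : Rn N), σ⟫))]
    refine lintegral_congr fun σ => ?_
    rw [← hL, L.inner_map_map, cosTheta, inner_smul_left, real_inner_comm]
    congr 2
    simp; field_simp


/-! ### Weak formulation -/

lemma nested_integral_sub {α β δ : Type*} [MeasurableSpace α] [MeasurableSpace β]
    [MeasurableSpace δ] {μ : Measure α} {ν : Measure β} {κ : Measure δ} [SFinite μ] [SFinite ν]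
    [SFinite κ] {X Y : α → β → δ → ℝ≥0∞}
    (hX : Measurable fun p : α × β × δ => X p.1 p.2.1 p.2.2)
    (hY : Measurable fun p : α × β × δ => Y p.1 p.2.1 p.2.2)
    (hXf : ∫⁻ a, ∫⁻ b, ∫⁻ c, X a b c ∂κ ∂ν ∂μ ≠ ⊤)
    (hYf : ∫⁻ a, ∫⁻ b, ∫⁻ c, Y a b c ∂κ ∂ν ∂μ ≠ ⊤) :
    ∫ a, ∫ b, ∫ c, ((X a b c).toReal - (Y a b c).toReal) ∂κ ∂ν ∂μ
      = (∫⁻ a, ∫⁻ b, ∫⁻ c, X a b c ∂κ ∂ν ∂μ).toReal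
        - (∫⁻ a, ∫⁻ b, ∫⁻ c, Y a b c ∂κ ∂ν ∂μ).toReal := by
  have tri : ∀ {X : α → β → δ → ℝ≥0∞}, Measurable (fun p : α × β × δ => X p.1 p.2.1 p.2.2) →
      ∫⁻ p, X p.1 p.2.1 p.2.2 ∂(μ.prod (ν.prod κ)) = ∫⁻ a, ∫⁻ b, ∫⁻ c, X a b c ∂κ ∂ν ∂μ := by
    intro X hX
    rw [lintegral_prod _ hX.aemeasurable]
    refine lintegral_congr fun a => ?_
    exact lintegral_prod (fun q : β × δ => X a q.1 q.2)
      (hX.comp (f := fun q : β × δ => (a, q)) (by fun_prop)).aemeasurable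
  rw [← tri hX] at hXf ⊢
  rw [← tri hY] at hYf ⊢
  have iX := integrable_toReal_of_lintegral_ne_top hX.aemeasurable hXf
  have iY := integrable_toReal_of_lintegral_ne_top hY.aemeasurable hYf
  rw [← integral_toReal hX.aemeasurable (ae_lt_top hX hXf),
    ← integral_toReal hY.aemeasurable (ae_lt_top hY hYf), ← integral_sub iX iY]
  have i : Integrable (fun p : α × β × δ =>
      (X p.1 p.2.1 p.2.2).toReal - (Y p.1 p.2.1 p.2.2).toReal) (μ.prod (ν.prod κ)) := iX.sub iY
  rw [integral_prod (fun p : α × β × δ =>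
      (X p.1 p.2.1 p.2.2).toReal - (Y p.1 p.2.1 p.2.2).toReal) i]
  refine integral_congr_ae ?_
  filter_upwards [i.prod_right_ae] with a ha
  exact (integral_prod _ ha).symm

/-- The bilinear collision form: the integral of `B F(w) F(v) ψ(v, w, σ)`. -/
def BF (N : ℕ) (Φ b : ℝ → ℝ) (F : Rn N → ℝ≥0∞) (ψ : Rn N → Rn N → Rn N → ℝ≥0∞) : ℝ≥0∞ :=
  I3 N fun v w σ => ψ v w σ * (kE N Φ b v w σ * (F w * F v))

lemma BF_le {N : ℕ} (hN : 2 ≤ N) {Φ b : ℝ → ℝ} {γ : ℝ} (hK : KernelOK N Φ b γ)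
    (hb : Measurable b) {C : ℝ} (hC : ∀ z : Rn N, Φ ‖z‖ ≤ C) (F : Rn N → ℝ≥0∞)
    (ψ : Rn N → Rn N → Rn N → ℝ≥0∞) (Ψ : Rn N → Rn N → ℝ≥0∞)
    (h : ∀ v w σ, ‖σ‖ = 1 → ψ v w σ ≤ Ψ v w) :
    BF N Φ b F ψ ≤ ∫⁻ v, ∫⁻ w, ENNReal.ofReal C * bBar N hN b * (Ψ v w * (F w * F v)) := by
  unfold BF I3
  refine lintegral_mono fun v => lintegral_mono fun w => ?_
  calc ∫⁻ σ, ψ v w σ * (kE N Φ b v w σ * (F w * F v)) ∂(sphMeas N)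
      ≤ ∫⁻ σ, kE N Φ b v w σ * (Ψ v w * (F w * F v)) ∂(sphMeas N) := by
        refine lintegral_mono_ae ?_
        filter_upwards [sphMeas_norm N] with σ hσ
        calc _ ≤ Ψ v w * (kE N Φ b v w σ * (F w * F v)) := by gcongr; exact h v w σ hσ
          _ = _ := by ring
    _ = (∫⁻ σ, kE N Φ b v w σ ∂(sphMeas N)) * (Ψ v w * (F w * F v)) :=
        lintegral_mul_const _ (kE_meas hK.phi_smooth.continuous.measurable hb (by fun_prop)
          (by fun_prop) (by fun_prop))
    _ ≤ _ := by
        gcongr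
        refine (kE_int_le hN hK hb v w).trans ?_
        gcongr
        exact hC _

lemma lintegral_pair {N : ℕ} (c : ℝ≥0∞) (p q : Rn N → ℝ≥0∞) (hp : Measurable p)
    (hq : Measurable q) :
    ∫⁻ v, ∫⁻ w, c * (p v * q w) = c * ((∫⁻ v, p v) * ∫⁻ w, q w) := by
  have : ∀ v, ∫⁻ w, c * (p v * q w) = c * p v * ∫⁻ w, q w := fun v => by
    rw [← lintegral_const_mul _ hq]
    exact lintegral_congr fun w => by ring
  simp_rw [this]
  rw [lintegral_mul_const _ (by fun_prop), lintegral_const_mul _ hp]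
  ring

lemma IsSolution.meas_slice {N : ℕ} {Φ b : ℝ → ℝ} {f : ℝ → Rn N → ℝ} {fIn : Rn N → ℝ}
    (hf : IsSolution N Φ b f fIn) (t : ℝ) : Measurable (f t) :=
  hf.meas.comp (f := fun v : Rn N => (t, v)) (by fun_prop)

lemma IsSolution.initial {N : ℕ} {Φ b : ℝ → ℝ} {f : ℝ → Rn N → ℝ} {fIn : Rn N → ℝ}
    (hf : IsSolution N Φ b f fIn) : f 0 = fIn := by
  funext v
  simpa using hf.eqn 0 le_rfl v

lemma IsSolution.integrable {N : ℕ} {Φ b : ℝ → ℝ} {f : ℝ → Rn N → ℝ} {fIn : Rn N → ℝ}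
    (hf : IsSolution N Φ b f fIn) {t : ℝ} (ht : 0 ≤ t) :
    Integrable (f t) ∧ Integrable fun v => f t v * ‖v‖ ^ 2 := by
  have h := hf.mem_L1_2 t ht
  have hm := hf.meas_slice t
  unfold L1s at h
  constructor
  · refine ⟨hm.aestronglyMeasurable, lt_of_le_of_lt (lintegral_mono fun v => ?_) h⟩
    rw [← ofReal_norm]
    apply ENNReal.ofReal_le_ofReal
    norm_num
    nlinarith [abs_nonneg (f t v), sq_nonneg ‖v‖, mul_nonneg (abs_nonneg (f t v)) (sq_nonneg ‖v‖)]
  · refine ⟨by fun_prop, lt_of_le_of_lt (lintegral_mono fun v => ?_) h⟩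
    rw [← ofReal_norm]
    apply ENNReal.ofReal_le_ofReal
    norm_num
    nlinarith [abs_nonneg (f t v), sq_nonneg ‖v‖, mul_nonneg (abs_nonneg (f t v)) (sq_nonneg ‖v‖)]

lemma IsSolution.lmass {N : ℕ} {Φ b : ℝ → ℝ} {f : ℝ → Rn N → ℝ} {fIn : Rn N → ℝ}
    (hf : IsSolution N Φ b f fIn) {t : ℝ} (ht : 0 ≤ t) :
    ∫⁻ v, ENNReal.ofReal (f t v) = ENNReal.ofReal (∫ v, fIn v) := by
  rw [← hf.mass t ht, ofReal_integral_eq_lintegral_ofReal (hf.integrable ht).1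
    (Filter.Eventually.of_forall fun v => hf.nonneg t v)]

/-- Weak form of the equation against an arbitrary nonnegative test function, as an identity in
`[0, ∞]` with the loss term moved to the left. Only the finiteness of the mass is needed: for
almost every `v` the gain and loss rates at `v` are integrable in time, and there the Bochner
integrals of the equation split. -/
lemma weak_form {N : ℕ} (hN : 2 ≤ N) [IsFiniteMeasure (sphMeas N)] {Φ b : ℝ → ℝ} {γ : ℝ}
    (hK : KernelOK N Φ b γ) (hb : Measurable b) {C : ℝ} (hC : ∀ z : Rn N, Φ ‖z‖ ≤ C)
    {f : ℝ → Rn N → ℝ} {fIn : Rn N → ℝ} (hf : IsSolution N Φ b f fIn)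
    {φ : Rn N → ℝ≥0∞} (hφ : Measurable φ) {t : ℝ} (ht : 0 ≤ t) :
    (∫⁻ v, φ v * ENNReal.ofReal (f t v)) + ∫⁻ τ in Set.Ioc (0:ℝ) t,
        BF N Φ b (fun v => ENNReal.ofReal (f τ v)) (fun v _ _ => φ v)
      = (∫⁻ v, φ v * ENNReal.ofReal (fIn v)) + ∫⁻ τ in Set.Ioc (0:ℝ) t,
        BF N Φ b (fun v => ENNReal.ofReal (f τ v)) (fun v w σ => φ (vP N v w σ)) := by
  have hΦm : Measurable Φ := hK.phi_smooth.continuous.measurable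
  obtain ⟨b0, hb0, hbb⟩ := hK.b_pos
  set μ : Measure ℝ := volume.restrict (Set.Ioc (0:ℝ) t) with hμ
  set X : Rn N → ℝ → Rn N → Rn N → ℝ≥0∞ := fun v τ w σ => kE N Φ b v w σ *
    (ENNReal.ofReal (f τ (vSP N v w σ)) * ENNReal.ofReal (f τ (vP N v w σ))) with hX
  set Y : Rn N → ℝ → Rn N → Rn N → ℝ≥0∞ := fun v τ w σ => kE N Φ b v w σ *
    (ENNReal.ofReal (f τ w) * ENNReal.ofReal (f τ v)) with hY
  have mf : ∀ {α : Type} [MeasurableSpace α] {g : α → ℝ} {h : α → Rn N}, Measurable g →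
      Measurable h → Measurable fun a => ENNReal.ofReal (f (g a) (h a)) :=
    fun hg hh => (hf.meas.comp (hg.prodMk hh)).ennreal_ofReal
  have mX : Measurable fun p : Rn N × ℝ × Rn N × Rn N => X p.1 p.2.1 p.2.2.1 p.2.2.2 := by
    refine (kE_meas hΦm hb (by fun_prop) (by fun_prop) (by fun_prop)).mul
      ((mf (by fun_prop) ?_).mul (mf (by fun_prop) ?_))
    · unfold vSP; fun_prop
    · unfold vP; fun_prop
  have mY : Measurable fun p : Rn N × ℝ × Rn N × Rn N => Y p.1 p.2.1 p.2.2.1 p.2.2.2 :=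
    (kE_meas hΦm hb (by fun_prop) (by fun_prop) (by fun_prop)).mul
      ((mf (by fun_prop) (by fun_prop)).mul (mf (by fun_prop) (by fun_prop)))
  -- partial integrals of `X` and `Y` are measurable
  have m2 : ∀ {Z : Rn N → ℝ → Rn N → Rn N → ℝ≥0∞},
      Measurable (fun p : Rn N × ℝ × Rn N × Rn N => Z p.1 p.2.1 p.2.2.1 p.2.2.2) →
      Measurable fun p : Rn N × ℝ => ∫⁻ w, ∫⁻ σ, Z p.1 p.2 w σ ∂(sphMeas N) := by
    intro Z hZ
    have h1 : Measurable fun q : (Rn N × ℝ) × Rn N => ∫⁻ σ, Z q.1.1 q.1.2 q.2 σ ∂(sphMeas N) :=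
      Measurable.lintegral_prod_right' (f := fun q : ((Rn N × ℝ) × Rn N) × Rn N =>
        Z q.1.1.1 q.1.1.2 q.1.2 q.2)
        (hZ.comp (f := fun q : ((Rn N × ℝ) × Rn N) × Rn N => (q.1.1.1, q.1.1.2, q.1.2, q.2))
          (by fun_prop))
    exact Measurable.lintegral_prod_right' h1
  have m3 : ∀ {Z : Rn N → ℝ → Rn N → Rn N → ℝ≥0∞},
      Measurable (fun p : Rn N × ℝ × Rn N × Rn N => Z p.1 p.2.1 p.2.2.1 p.2.2.2) →
      Measurable fun v : Rn N => ∫⁻ τ, ∫⁻ w, ∫⁻ σ, Z v τ w σ ∂(sphMeas N) ∂volume ∂μ :=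
    fun hZ => Measurable.lintegral_prod_right' (m2 hZ)
  have swapφ : ∀ {Z : Rn N → ℝ → Rn N → Rn N → ℝ≥0∞} {χ : Rn N → ℝ≥0∞}, Measurable χ →
      Measurable (fun p : Rn N × ℝ × Rn N × Rn N => Z p.1 p.2.1 p.2.2.1 p.2.2.2) →
      ∫⁻ v, χ v * ∫⁻ τ, ∫⁻ w, ∫⁻ σ, Z v τ w σ ∂(sphMeas N) ∂volume ∂μ
        = ∫⁻ τ, I3 N (fun v w σ => χ v * Z v τ w σ) ∂μ := by
    intro Z χ hχ hZ
    have e1 : ∀ v, χ v * ∫⁻ τ, ∫⁻ w, ∫⁻ σ, Z v τ w σ ∂(sphMeas N) ∂volume ∂μ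
        = ∫⁻ τ, χ v * ∫⁻ w, ∫⁻ σ, Z v τ w σ ∂(sphMeas N) ∂volume ∂μ := fun v =>
      (lintegral_const_mul _ ((m2 hZ).comp (f := fun τ : ℝ => (v, τ)) (by fun_prop))).symm
    simp_rw [e1]
    rw [lintegral_lintegral_swap]
    · unfold I3
      refine lintegral_congr fun τ => lintegral_congr fun v => ?_
      rw [← lintegral_const_mul]
      · refine lintegral_congr fun w => ?_
        rw [← lintegral_const_mul]
        exact hZ.comp (f := fun σ : Rn N => (v, τ, w, σ)) (by fun_prop)
      · exact Measurable.lintegral_prod_right' (f := fun q : Rn N × Rn N => Z v τ q.1 q.2)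
          (hZ.comp (f := fun q : Rn N × Rn N => (v, τ, q.1, q.2)) (by fun_prop))
    · exact ((hχ.comp measurable_fst).mul (m2 hZ)).aemeasurable
  have gain : ∀ {χ : Rn N → ℝ≥0∞}, Measurable χ → ∀ τ, I3 N (fun v w σ => χ v * X v τ w σ)
      = BF N Φ b (fun v => ENNReal.ofReal (f τ v)) (fun v w σ => χ (vP N v w σ)) := fun hχ τ =>
    gain_change hN hΦm hb (hf.meas_slice τ).ennreal_ofReal hχ
  have loss : ∀ {χ : Rn N → ℝ≥0∞}, ∀ τ, I3 N (fun v w σ => χ v * Y v τ w σ)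
      = BF N Φ b (fun v => ENNReal.ofReal (f τ v)) (fun v w σ => χ v) := fun τ => rfl
  -- total collision rate is finite
  have bd : ∀ ψ : Rn N → Rn N → Rn N → ℝ≥0∞, (∀ v w σ, ψ v w σ = 1) →
      ∫⁻ τ, BF N Φ b (fun v => ENNReal.ofReal (f τ v)) ψ ∂μ ≠ ⊤ := by
    intro ψ hψ
    refine ne_top_of_le_ne_top (b := ∫⁻ τ, ENNReal.ofReal C * bBar N hN b *
      (ENNReal.ofReal (∫ v, fIn v) * ENNReal.ofReal (∫ v, fIn v)) ∂μ) ?_ ?_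
    · rw [lintegral_const]
      refine ENNReal.mul_ne_top (ENNReal.mul_ne_top (ENNReal.mul_ne_top ENNReal.ofReal_ne_top
        (bBar_lt_top hN hK).ne) (ENNReal.mul_ne_top ENNReal.ofReal_ne_top ENNReal.ofReal_ne_top)) ?_
      rw [hμ]; simp
    · refine lintegral_mono_ae ?_
      filter_upwards [ae_restrict_mem measurableSet_Ioc] with τ hτ
      refine (BF_le hN hK hb hC _ ψ (fun _ _ => 1) (fun v w σ _ => (hψ v w σ).le)).trans ?_
      have := lintegral_pair (ENNReal.ofReal C * bBar N hN b) (fun v => ENNReal.ofReal (f τ v))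
        (fun v => ENNReal.ofReal (f τ v)) (hf.meas_slice τ).ennreal_ofReal
        (hf.meas_slice τ).ennreal_ofReal
      rw [hf.lmass hτ.1.le] at this
      rw [← this]
      refine lintegral_mono fun v => lintegral_mono fun w => ?_
      rw [one_mul, mul_comm (ENNReal.ofReal (f τ w))]
  have fin : ∀ {Z : Rn N → ℝ → Rn N → Rn N → ℝ≥0∞},
      Measurable (fun p : Rn N × ℝ × Rn N × Rn N => Z p.1 p.2.1 p.2.2.1 p.2.2.2) →
      ∫⁻ τ, I3 N (fun v w σ => 1 * Z v τ w σ) ∂μ ≠ ⊤ →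
      ∀ᵐ v, ∫⁻ τ, ∫⁻ w, ∫⁻ σ, Z v τ w σ ∂(sphMeas N) ∂volume ∂μ < ⊤ := by
    intro Z hZ h
    refine ae_lt_top (m3 hZ) ?_
    rw [← swapφ (χ := fun _ => 1) measurable_const hZ] at h
    simpa using h
  have finX := fin mX (by
    rw [lintegral_congr fun τ => gain (χ := fun _ => 1) measurable_const τ]
    exact bd _ fun _ _ _ => rfl)
  have finY := fin mY (by
    rw [lintegral_congr fun τ => loss (χ := fun _ => 1) τ]
    exact bd _ fun _ _ _ => rfl)
  have pt : ∀ᵐ v, ENNReal.ofReal (f t v)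
        + ∫⁻ τ, ∫⁻ w, ∫⁻ σ, Y v τ w σ ∂(sphMeas N) ∂volume ∂μ
      = ENNReal.ofReal (fIn v) + ∫⁻ τ, ∫⁻ w, ∫⁻ σ, X v τ w σ ∂(sphMeas N) ∂volume ∂μ := by
    filter_upwards [finX, finY] with v hx hy
    have e := hf.eqn t ht v
    have e2 : ∫ τ in Set.Ioc (0:ℝ) t, Qop N Φ b (f τ) (f τ) v
        = ∫ τ, ∫ w, ∫ σ, ((X v τ w σ).toReal - (Y v τ w σ).toReal) ∂(sphMeas N) ∂volume ∂μ := by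
      unfold Qop
      congr 1; funext τ; congr 1; funext w; congr 1; funext σ
      have hk : 0 ≤ Φ ‖v - w‖ * b (cosTheta N v w σ) :=
        mul_nonneg (phi_pos hK _) (hb0.le.trans (hbb _))
      simp only [hX, hY, kE, ENNReal.toReal_mul, ENNReal.toReal_ofReal hk,
        ENNReal.toReal_ofReal (hf.nonneg _ _)]
      ring
    rw [e2, nested_integral_sub (mX.comp (f := fun p : ℝ × Rn N × Rn N => (v, p)) (by fun_prop))
      (mY.comp (f := fun p : ℝ × Rn N × Rn N => (v, p)) (by fun_prop)) hx.ne hy.ne] at e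
    rw [← ENNReal.ofReal_toReal hx.ne, ← ENNReal.ofReal_toReal hy.ne,
      ← ENNReal.ofReal_add (hf.nonneg _ _) ENNReal.toReal_nonneg,
      ← ENNReal.ofReal_add (by rw [← hf.initial]; exact hf.nonneg _ _) ENNReal.toReal_nonneg, e]
    congr 1
    ring
  have big : ∫⁻ v, φ v * (ENNReal.ofReal (f t v)
        + ∫⁻ τ, ∫⁻ w, ∫⁻ σ, Y v τ w σ ∂(sphMeas N) ∂volume ∂μ)
      = ∫⁻ v, φ v * (ENNReal.ofReal (fIn v)
        + ∫⁻ τ, ∫⁻ w, ∫⁻ σ, X v τ w σ ∂(sphMeas N) ∂volume ∂μ) := by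
    refine lintegral_congr_ae ?_
    filter_upwards [pt] with v hv
    rw [hv]
  have hin : Measurable fIn := hf.initial ▸ hf.meas_slice 0
  simp_rw [mul_add] at big
  have q1 : Measurable fun v => φ v * ENNReal.ofReal (f t v) :=
    hφ.mul (hf.meas_slice t).ennreal_ofReal
  have q2 : Measurable fun v => φ v * ENNReal.ofReal (fIn v) := hφ.mul hin.ennreal_ofReal
  rw [lintegral_add_left q1, lintegral_add_left q2, swapφ hφ mY, swapφ hφ mX,
    lintegral_congr fun τ => gain hφ τ] at big
  exact big

/-! ### Elementary inequalities -/

lemma norm_vP_sq {N : ℕ} (v w σ : Rn N) (hσ : ‖σ‖ = 1) :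
    ‖vP N v w σ‖ ^ 2 = (‖v‖ ^ 2 + ‖w‖ ^ 2) / 2 + ‖v - w‖ * ⟪v + w, σ⟫ / 2 ∧
    ‖vSP N v w σ‖ ^ 2 = (‖v‖ ^ 2 + ‖w‖ ^ 2) / 2 - ‖v - w‖ * ⟪v + w, σ⟫ / 2 := by
  have h1 := norm_add_sq_real v w
  have h2 := norm_sub_sq_real v w
  unfold vP vSP
  constructor
  · rw [norm_add_sq_real, norm_smul, norm_smul, inner_smul_left, inner_smul_right, hσ]
    simp only [conj_trivial, Real.norm_eq_abs, mul_pow, sq_abs]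
    linear_combination (1/4) * h1 + (1/4) * h2
  · rw [norm_sub_sq_real, norm_smul, norm_smul, inner_smul_left, inner_smul_right, hσ]
    simp only [conj_trivial, Real.norm_eq_abs, mul_pow, sq_abs]
    linear_combination (1/4) * h1 + (1/4) * h2

/-- On the slab of directions almost orthogonal to `v + w`, the collision shares the energy: both
outgoing particles carry at least one eighth of it. -/
lemma slab_share {N : ℕ} (v w σ : Rn N) (hσ : ‖σ‖ = 1) (h : 2 * ⟪v + w, σ⟫ ^ 2 ≤ ‖v + w‖ ^ 2) :
    (2 + ‖v‖ ^ 2 + ‖w‖ ^ 2) / 8 ≤ 1 + ‖vP N v w σ‖ ^ 2 ∧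
    (2 + ‖v‖ ^ 2 + ‖w‖ ^ 2) / 8 ≤ 1 + ‖vSP N v w σ‖ ^ 2 := by
  obtain ⟨h1, h2⟩ := norm_vP_sq v w σ hσ
  have hp := parallelogram_law_with_norm ℝ v w
  set x := ‖v - w‖ * ⟪v + w, σ⟫ with hx
  have hsq : x ^ 2 ≤ (3 / 4 * (‖v‖ ^ 2 + ‖w‖ ^ 2)) ^ 2 := by
    have e : 2 * x ^ 2 ≤ ‖v - w‖ ^ 2 * ‖v + w‖ ^ 2 := by
      rw [hx, mul_pow]
      nlinarith [sq_nonneg ‖v - w‖]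
    nlinarith [sq_nonneg (‖v - w‖ ^ 2 - ‖v + w‖ ^ 2), sq_nonneg (‖v‖ ^ 2 + ‖w‖ ^ 2)]
  have hab := abs_le_of_sq_le_sq' hsq (by positivity)
  have := sq_nonneg ‖v‖
  have := sq_nonneg ‖w‖
  constructor <;> nlinarith [hab.1, hab.2]

/-- Chord bound for the convex function `x ↦ x ^ p` between `A` and `2 A`. -/
lemma rpow_add_le_chord {p A C : ℝ} (hp : 1 < p) (hA : 0 < A) (hC : 0 ≤ C) (hCA : C ≤ A) :
    (A + C) ^ p ≤ A ^ p + 2 ^ p * (C * A ^ (p - 1)) := by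
  have h := (convexOn_rpow hp.le).2 (Set.mem_Ici.2 hA.le)
    (Set.mem_Ici.2 (by positivity : (0:ℝ) ≤ 2 * A))
    (by rw [sub_nonneg, div_le_one hA]; exact hCA : 0 ≤ 1 - C / A) (by positivity : 0 ≤ C / A)
    (by ring)
  simp only [smul_eq_mul] at h
  rw [show (1 - C / A) * A + C / A * (2 * A) = A + C by field_simp; ring,
    Real.mul_rpow (by norm_num) hA.le] at h
  have e : C * A ^ (p - 1) = C / A * A ^ p := by
    rw [Real.rpow_sub_one hA.ne']; field_simp
  have : 0 ≤ C / A * A ^ p := by positivity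
  rw [e]; nlinarith

lemma rpow_add_le {p A C : ℝ} (hp : 1 < p) (hA : 0 < A) (hC : 0 < C) :
    (A + C) ^ p ≤ A ^ p + C ^ p + 2 ^ p * (C * A ^ (p - 1) + A * C ^ (p - 1)) := by
  have h1 : 0 ≤ 2 ^ p * (A * C ^ (p - 1)) := by positivity
  have h2 : 0 ≤ 2 ^ p * (C * A ^ (p - 1)) := by positivity
  have h3 : 0 ≤ A ^ p := by positivity
  have h4 : 0 ≤ C ^ p := by positivity
  rcases le_total C A with h | h
  · have := rpow_add_le_chord hp hA hC.le h
    linarith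
  · have := rpow_add_le_chord hp hC hA.le h
    rw [add_comm C A] at this
    linarith

/-- Superadditivity of `x ↦ x ^ p` with a parameter `m` bounding both parts. -/
lemma rpow_split_le {p X Y m : ℝ} (hp : 1 < p) (hX : 0 < X) (hY : 0 < Y) (hXm : X ≤ m)
    (hYm : Y ≤ m) : X ^ p + Y ^ p ≤ (X + Y) * m ^ (p - 1) := by
  have e : ∀ {Z : ℝ}, 0 < Z → Z ≤ m → Z ^ p ≤ Z * m ^ (p - 1) := fun {Z} hZ h => by
    calc Z ^ p = Z * Z ^ (p - 1) := by rw [Real.rpow_sub_one hZ.ne']; field_simp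
      _ ≤ _ := by
        gcongr
  have := e hX hXm
  have := e hY hYm
  linarith

/-- Povzner inequality: under a collision with energy splitting `X + Y = A + C` the sum of `p`-th
powers grows at most by cross terms, with an additional loss when the splitting is balanced. -/
lemma povzner {p X Y A C : ℝ} (hp : 1 < p) (hX : 0 < X) (hY : 0 < Y) (hA : 0 < A) (hC : 0 < C)
    (h : X + Y = A + C) :
    X ^ p + Y ^ p ≤ A ^ p + C ^ p + 2 ^ p * (C * A ^ (p - 1) + A * C ^ (p - 1)) ∧
    ((A + C) / 8 ≤ X → (A + C) / 8 ≤ Y →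
      X ^ p + Y ^ p + (1 - (7 / 8) ^ (p - 1)) * (A + C) ^ p
        ≤ A ^ p + C ^ p + 2 ^ p * (C * A ^ (p - 1) + A * C ^ (p - 1))) := by
  have hS : 0 < A + C := by positivity
  have e : (A + C) * (A + C) ^ (p - 1) = (A + C) ^ p := by
    rw [Real.rpow_sub_one hS.ne']; field_simp
  have key := rpow_add_le hp hA hC
  constructor
  · have := rpow_split_le (m := A + C) hp hX hY (by linarith) (by linarith)
    rw [h, e] at this
    linarith
  · intro h1 h2
    have := rpow_split_le (m := 7 / 8 * (A + C)) hp hX hY (by linarith) (by linarith)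
    rw [h, Real.mul_rpow (by norm_num) hS.le] at this
    have e' : (A + C) * ((7 / 8) ^ (p - 1) * (A + C) ^ (p - 1)) = (7 / 8) ^ (p - 1) * (A + C) ^ p := by
      rw [← e]; ring
    linarith

/-- A weight of lower order is absorbed by the dissipated weight: this is where `-2 < γ` enters. -/
lemma interpolate {p γ ε : ℝ} (hp : 1 < p) (hγ : γ ∈ Set.Ioc (-2 : ℝ) 0) (hε : 0 < ε) :
    ∃ C : ℝ, 0 ≤ C ∧ ∀ x : ℝ, 0 ≤ x →
      (1 + x ^ 2) ^ (p - 1) ≤ ε * ((1 + x) ^ γ * (1 + x ^ 2) ^ p) + C := by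
  obtain ⟨hγ1, hγ2⟩ := hγ
  have hg : 0 < 1 + γ / 2 := by linarith
  set R : ℝ := (2 / ε) ^ (1 / (1 + γ / 2)) with hR
  refine ⟨R ^ (p - 1), by positivity, fun x hx => ?_⟩
  set A : ℝ := 1 + x ^ 2 with hA
  have hA0 : 0 < A := by positivity
  have h1 : (2:ℝ)⁻¹ * A ^ (γ / 2) ≤ (1 + x) ^ γ := by
    have e1 : (1 + x) ^ γ = ((1 + x) ^ 2) ^ (γ / 2) := by
      rw [← Real.rpow_natCast, ← Real.rpow_mul (by positivity)]
      congr 1; push_cast; ring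
    rw [e1]
    calc (2:ℝ)⁻¹ * A ^ (γ / 2) ≤ 2 ^ (γ / 2) * A ^ (γ / 2) := by
          gcongr
          rw [← Real.rpow_neg_one]
          exact Real.rpow_le_rpow_of_exponent_le (by norm_num) (by linarith)
      _ = (2 * A) ^ (γ / 2) := (Real.mul_rpow (by norm_num) hA0.le).symm
      _ ≤ _ := Real.rpow_le_rpow_of_nonpos (by positivity) (by nlinarith [sq_nonneg (1 - x)])
          (by linarith)
  have h2 : A ^ (γ / 2) * A ^ p = A ^ (p - 1) * A ^ (1 + γ / 2) := by
    rw [← Real.rpow_add hA0, ← Real.rpow_add hA0]; congr 1; ring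
  have hpos : 0 ≤ ε * ((1 + x) ^ γ * A ^ p) := by positivity
  rcases le_total A R with h | h
  · have := Real.rpow_le_rpow hA0.le h (by linarith : 0 ≤ p - 1)
    linarith
  · have h3 : 2 / ε ≤ A ^ (1 + γ / 2) := by
      have := Real.rpow_le_rpow (by positivity) h hg.le
      rwa [hR, ← Real.rpow_mul (by positivity), one_div, inv_mul_cancel₀ hg.ne',
        Real.rpow_one] at this
    have h4 : A ^ (p - 1) ≤ ε * ((1 + x) ^ γ * A ^ p) := by
      calc A ^ (p - 1) = ε * (2⁻¹ * (A ^ (p - 1) * (2 / ε))) := by field_simp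
        _ ≤ ε * (2⁻¹ * (A ^ (p - 1) * A ^ (1 + γ / 2))) := by gcongr
        _ = ε * (2⁻¹ * A ^ (γ / 2) * A ^ p) := by rw [← h2]; ring
        _ ≤ _ := by gcongr
    have : 0 ≤ R ^ (p - 1) := by positivity
    linarith

/-- Pointwise form of the Cauchy–Schwarz lower bound on the weighted mass. -/
lemma low_weight {γ T x : ℝ} (hγ : γ ∈ Set.Ioc (-2 : ℝ) 0) (hT : 0 < T) (hx : 0 ≤ x) :
    1 / T ≤ (1 + x) ^ γ + (1 + x ^ 2) / (2 * T ^ 2) := by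
  have h1 : 1 / (2 * (1 + x ^ 2)) ≤ (1 + x) ^ γ := by
    calc 1 / (2 * (1 + x ^ 2)) ≤ 1 / (1 + x) ^ 2 := by
          gcongr
          nlinarith [sq_nonneg (1 - x)]
      _ = (1 + x) ^ (-2 : ℝ) := by
          rw [Real.rpow_neg (by positivity), one_div]
          congr 1
          exact (Real.rpow_natCast _ 2).symm
      _ ≤ _ := Real.rpow_le_rpow_of_exponent_le (by linarith) hγ.1.le
  have h2 : 1 / T ≤ 1 / (2 * (1 + x ^ 2)) + (1 + x ^ 2) / (2 * T ^ 2) := by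
    have hu : 0 < 1 + x ^ 2 := by positivity
    rw [div_add_div _ _ (by positivity) (by positivity), div_le_div_iff₀ hT (by positivity)]
    nlinarith [mul_nonneg hT.le (sq_nonneg (T - (1 + x ^ 2)))]
  linarith

/-- Gronwall lemma in `[0, ∞]` without measurability: a bounded function dominated by its own
integral is controlled by its initial bound. -/
lemma gronwall_bdd {y : ℝ → ℝ≥0∞} {M y0 : ℝ≥0∞} {K : ℝ} (hK : 0 < K) (hM : M ≠ ⊤)
    (hy : ∀ t, 0 ≤ t → y t ≤ M)
    (h : ∀ t, 0 ≤ t → y t ≤ y0 + ENNReal.ofReal K * ∫⁻ τ in Set.Ioc (0:ℝ) t, y τ) :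
    ∀ t, 0 ≤ t → y t ≤ 2 * y0 * ENNReal.ofReal (Real.exp (2 * K * t)) := by
  -- the supremum of `y` against the weight `exp (-2 K t)`
  set Y : ℝ≥0∞ := ⨆ t : {t : ℝ // 0 ≤ t}, y t * ENNReal.ofReal (Real.exp (-(2 * K * t.1)))
    with hY
  have hexp : ∀ t, ENNReal.ofReal (Real.exp (-(2 * K * t))) *
      ENNReal.ofReal (Real.exp (2 * K * t)) = 1 := fun t => by
    rw [← ENNReal.ofReal_mul (Real.exp_nonneg _), ← Real.exp_add]; simp
  have hYM : Y ≤ M := by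
    refine iSup_le fun t => ?_
    calc _ ≤ M * 1 := by
          gcongr
          · exact hy t.1 t.2
          · rw [← ENNReal.ofReal_one]
            apply ENNReal.ofReal_le_ofReal
            rw [Real.exp_le_one_iff]
            have := mul_nonneg hK.le t.2
            linarith
      _ = M := mul_one _
  have hyY : ∀ t, 0 ≤ t → y t ≤ Y * ENNReal.ofReal (Real.exp (2 * K * t)) := fun t ht => by
    calc y t = y t * ENNReal.ofReal (Real.exp (-(2 * K * t))) *
          ENNReal.ofReal (Real.exp (2 * K * t)) := by rw [mul_assoc, hexp, mul_one]
      _ ≤ _ := by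
        gcongr
        exact le_iSup (fun t : {t : ℝ // 0 ≤ t} =>
          y t * ENNReal.ofReal (Real.exp (-(2 * K * t.1)))) ⟨t, ht⟩
  have hint : ∀ t, 0 ≤ t → ENNReal.ofReal K * ∫⁻ τ in Set.Ioc (0:ℝ) t, y τ
      ≤ Y / 2 * ENNReal.ofReal (Real.exp (2 * K * t)) := fun t ht => by
    have hYt : Y ≠ ⊤ := ne_top_of_le_ne_top hM hYM
    have e1 : ∫⁻ τ in Set.Ioc (0:ℝ) t, y τ
        ≤ Y * ∫⁻ τ in Set.Ioc (0:ℝ) t, ENNReal.ofReal (Real.exp (2 * K * τ)) := by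
      rw [← lintegral_const_mul' _ _ hYt]
      refine lintegral_mono_ae ?_
      filter_upwards [ae_restrict_mem measurableSet_Ioc] with τ hτ
      exact hyY τ hτ.1.le
    have e2 : ∫⁻ τ in Set.Ioc (0:ℝ) t, ENNReal.ofReal (Real.exp (2 * K * τ))
        = ENNReal.ofReal ((2 * K)⁻¹ * (Real.exp (2 * K * t) - 1)) := by
      have hc : Continuous fun τ : ℝ => Real.exp (2 * K * τ) := by fun_prop
      rw [← ofReal_integral_eq_lintegral_ofReal (hc.integrableOn_Ioc)
        (Filter.Eventually.of_forall fun τ => Real.exp_nonneg _),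
        ← intervalIntegral.integral_of_le ht,
        intervalIntegral.integral_comp_mul_left (fun x => Real.exp x) (by positivity)]
      simp [integral_exp]
    calc _ ≤ ENNReal.ofReal K * (Y * ENNReal.ofReal ((2 * K)⁻¹ * Real.exp (2 * K * t))) := by
          gcongr
          refine e1.trans ?_
          rw [e2]
          gcongr
          linarith
      _ = Y * ENNReal.ofReal (2⁻¹ * Real.exp (2 * K * t)) := by
          rw [mul_left_comm, ← ENNReal.ofReal_mul hK.le]
          congr 2
          field_simp
      _ = _ := by
          rw [ENNReal.ofReal_mul (by norm_num), ENNReal.ofReal_inv_of_pos (by norm_num),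
            ENNReal.ofReal_ofNat, ENNReal.div_eq_inv_mul]
          ring
  have hY2 : Y ≤ y0 + Y / 2 := by
    refine iSup_le fun t => ?_
    calc y t * ENNReal.ofReal (Real.exp (-(2 * K * t.1)))
        ≤ (y0 + Y / 2 * ENNReal.ofReal (Real.exp (2 * K * t))) *
          ENNReal.ofReal (Real.exp (-(2 * K * t.1))) := by
          gcongr
          exact (h t.1 t.2).trans (add_le_add le_rfl (hint t.1 t.2))
      _ = y0 * ENNReal.ofReal (Real.exp (-(2 * K * t.1))) + Y / 2 *
          (ENNReal.ofReal (Real.exp (-(2 * K * t.1))) * ENNReal.ofReal (Real.exp (2 * K * t))) := by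
          ring
      _ ≤ y0 * 1 + Y / 2 := by
          rw [hexp, mul_one]
          gcongr
          rw [← ENNReal.ofReal_one]
          apply ENNReal.ofReal_le_ofReal
          rw [Real.exp_le_one_iff]
          have := mul_nonneg hK.le t.2
          linarith
      _ = _ := by rw [mul_one]
  have hY3 : Y ≤ 2 * y0 := by
    have hYt : Y / 2 ≠ ⊤ := (ENNReal.div_lt_top (ne_top_of_le_ne_top hM hYM) (by norm_num)).ne
    have : Y / 2 ≤ y0 := by
      have h' : Y / 2 + Y / 2 ≤ y0 + Y / 2 := by rwa [ENNReal.add_halves]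
      exact (ENNReal.add_le_add_iff_right hYt).1 h'
    calc Y = Y / 2 + Y / 2 := (ENNReal.add_halves _).symm
      _ ≤ y0 + y0 := add_le_add this this
      _ = _ := (two_mul _).symm
  intro t ht
  exact (hyY t ht).trans (by gcongr)

/-! ### Bounds on the collision form -/

/-- The polynomial weight `(1 + |v|²) ^ p`. -/
def wt (N : ℕ) (p : ℝ) (v : Rn N) : ℝ≥0∞ := ENNReal.ofReal ((1 + ‖v‖ ^ 2) ^ p)

/-- The weight `(1 + |v|) ^ γ` of the kinetic factor of the kernel. -/
def lw (N : ℕ) (γ : ℝ) (v : Rn N) : ℝ≥0∞ := ENNReal.ofReal ((1 + ‖v‖) ^ γ)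

@[fun_prop]
lemma wt_meas (N : ℕ) (p : ℝ) : Measurable (wt N p) := by
  unfold wt; fun_prop

@[fun_prop]
lemma lw_meas (N : ℕ) (γ : ℝ) : Measurable (lw N γ) := by
  unfold lw; fun_prop

lemma I3_add {N : ℕ} [IsFiniteMeasure (sphMeas N)] {X Y : Rn N → Rn N → Rn N → ℝ≥0∞}
    (hX : Measurable fun p : Rn N × Rn N × Rn N => X p.1 p.2.1 p.2.2) :
    I3 N (fun v w σ => X v w σ + Y v w σ) = I3 N X + I3 N Y := by
  have h1 : Measurable fun p : Rn N × Rn N => ∫⁻ σ, X p.1 p.2 σ ∂(sphMeas N) :=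
    Measurable.lintegral_prod_right' (f := fun q : (Rn N × Rn N) × Rn N => X q.1.1 q.1.2 q.2)
      (hX.comp (f := fun q : (Rn N × Rn N) × Rn N => (q.1.1, q.1.2, q.2)) (by fun_prop))
  have h2 : Measurable fun v : Rn N => ∫⁻ w, ∫⁻ σ, X v w σ ∂(sphMeas N) :=
    Measurable.lintegral_prod_right' h1
  unfold I3
  rw [← lintegral_add_left h2]
  refine lintegral_congr fun v => ?_
  have h3 : Measurable fun w : Rn N => ∫⁻ σ, X v w σ ∂(sphMeas N) :=
    h1.comp (f := fun w : Rn N => (v, w)) (by fun_prop)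
  rw [← lintegral_add_left h3]
  refine lintegral_congr fun w => ?_
  exact lintegral_add_left (hX.comp (f := fun σ : Rn N => (v, w, σ)) (by fun_prop)) _

section

variable {N : ℕ} {Φ b : ℝ → ℝ} {F : Rn N → ℝ≥0∞}

lemma BF_meas (hΦ : Measurable Φ) (hb : Measurable b) (hF : Measurable F)
    {ψ : Rn N → Rn N → Rn N → ℝ≥0∞}
    (hψ : Measurable fun p : Rn N × Rn N × Rn N => ψ p.1 p.2.1 p.2.2) :
    Measurable fun p : Rn N × Rn N × Rn N =>
      ψ p.1 p.2.1 p.2.2 * (kE N Φ b p.1 p.2.1 p.2.2 * (F p.2.1 * F p.1)) :=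
  hψ.mul ((kE_meas hΦ hb (by fun_prop) (by fun_prop) (by fun_prop)).mul (by fun_prop))

lemma BF_add [IsFiniteMeasure (sphMeas N)] (hΦ : Measurable Φ) (hb : Measurable b) (hF : Measurable F)
    {ψ χ : Rn N → Rn N → Rn N → ℝ≥0∞}
    (hψ : Measurable fun p : Rn N × Rn N × Rn N => ψ p.1 p.2.1 p.2.2) :
    BF N Φ b F (fun v w σ => ψ v w σ + χ v w σ) = BF N Φ b F ψ + BF N Φ b F χ := by
  unfold BF
  simp_rw [add_mul]
  exact I3_add (BF_meas hΦ hb hF hψ)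

lemma BF_mono {ψ χ : Rn N → Rn N → Rn N → ℝ≥0∞}
    (h : ∀ v w σ, ‖σ‖ = 1 → ψ v w σ ≤ χ v w σ) : BF N Φ b F ψ ≤ BF N Φ b F χ := by
  unfold BF I3
  refine lintegral_mono fun v => lintegral_mono fun w => lintegral_mono_ae ?_
  filter_upwards [sphMeas_norm N] with σ hσ
  gcongr
  exact h v w σ hσ

/-- Exchanging the two colliding particles. -/
lemma BF_swap [IsFiniteMeasure (sphMeas N)] (hΦ : Measurable Φ) (hb : Measurable b) (hF : Measurable F)
    {ψ : Rn N → Rn N → Rn N → ℝ≥0∞}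
    (hψ : Measurable fun p : Rn N × Rn N × Rn N => ψ p.1 p.2.1 p.2.2) :
    BF N Φ b F ψ = BF N Φ b F fun v w σ => ψ w v (-σ) := by
  unfold BF
  rw [I3_swap _ (BF_meas hΦ hb hF hψ)]
  simp_rw [kE_swap]
  unfold I3
  refine lintegral_congr fun v => lintegral_congr fun w => lintegral_congr fun σ => ?_
  ring

lemma lintegral_pair_add (c : ℝ≥0∞) {p q r s : Rn N → ℝ≥0∞} (hp : Measurable p)
    (hq : Measurable q) (hr : Measurable r) (hs : Measurable s) :
    ∫⁻ v, ∫⁻ w, c * (p v * q w + r v * s w)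
      = c * ((∫⁻ v, p v) * (∫⁻ w, q w) + (∫⁻ v, r v) * ∫⁻ w, s w) := by
  rw [mul_add, ← lintegral_pair c p q hp hq, ← lintegral_pair c r s hr hs]
  have h1 : Measurable fun v => ∫⁻ w, c * (p v * q w) :=
    Measurable.lintegral_prod_right' (f := fun x : Rn N × Rn N => c * (p x.1 * q x.2))
      (by fun_prop)
  rw [← lintegral_add_left h1]
  refine lintegral_congr fun v => ?_
  have h2 : Measurable fun w => c * (p v * q w) := by fun_prop
  rw [← lintegral_add_left h2]
  simp_rw [mul_add]

lemma BF_loss_le (hN : 2 ≤ N) {γ : ℝ} (hK : KernelOK N Φ b γ) (hb : Measurable b)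
    {C : ℝ} (hC : ∀ z : Rn N, Φ ‖z‖ ≤ C) (hF : Measurable F) {χ : Rn N → ℝ≥0∞}
    (hχ : Measurable χ) :
    BF N Φ b F (fun v _ _ => χ v)
      ≤ ENNReal.ofReal C * bBar N hN b * ((∫⁻ v, χ v * F v) * ∫⁻ v, F v) := by
  refine (BF_le hN hK hb hC F _ (fun v _ => χ v) fun _ _ _ _ => le_rfl).trans ?_
  rw [← lintegral_pair _ (fun v => χ v * F v) F (by fun_prop) hF]
  refine lintegral_mono fun v => lintegral_mono fun w => le_of_eq ?_
  ring

lemma BF_gain_le (hN : 2 ≤ N) {γ : ℝ} (hK : KernelOK N Φ b γ) (hb : Measurable b)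
    {C : ℝ} (hC : ∀ z : Rn N, Φ ‖z‖ ≤ C) (hF : Measurable F) {χ : Rn N → ℝ≥0∞}
    (hχ : Measurable χ) {c : ℝ≥0∞}
    (h : ∀ v w σ, ‖σ‖ = 1 → χ (vP N v w σ) ≤ c * (χ v + χ w)) :
    BF N Φ b F (fun v w σ => χ (vP N v w σ))
      ≤ ENNReal.ofReal C * bBar N hN b * c * 2 * ((∫⁻ v, χ v * F v) * ∫⁻ v, F v) := by
  refine (BF_le hN hK hb hC F _ (fun v w => c * (χ v + χ w)) h).trans ?_
  have := lintegral_pair_add (ENNReal.ofReal C * bBar N hN b * c) (p := fun v => χ v * F v)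
    (q := F) (r := F) (s := fun v => χ v * F v) (by fun_prop) hF hF (by fun_prop)
  calc _ = ∫⁻ v, ∫⁻ w, ENNReal.ofReal C * bBar N hN b * c *
        (χ v * F v * F w + F v * (χ w * F w)) :=
        lintegral_congr fun v => lintegral_congr fun w => by ring
    _ ≤ _ := by rw [this]; apply le_of_eq; ring

/-! ### Propagation of moments -/

lemma vP_le {N : ℕ} (v w σ : Rn N) (hσ : ‖σ‖ = 1) :
    1 + ‖vP N v w σ‖ ^ 2 ≤ (1 + ‖v‖ ^ 2) + (1 + ‖w‖ ^ 2) := by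
  obtain ⟨h1, h2⟩ := norm_vP_sq v w σ hσ
  nlinarith [sq_nonneg ‖vSP N v w σ‖]

/-- The truncated weight `min (1 + |v|²) n ^ p`. -/
def wtn (N : ℕ) (p : ℝ) (n : ℕ) (v : Rn N) : ℝ≥0∞ := ENNReal.ofReal ((min (1 + ‖v‖ ^ 2) (n:ℝ)) ^ p)

@[fun_prop]
lemma wtn_meas (N : ℕ) (p : ℝ) (n : ℕ) : Measurable (wtn N p n) := by
  unfold wtn; fun_prop

lemma wtn_vP {N : ℕ} {p : ℝ} (hp : 0 < p) (n : ℕ) (v w σ : Rn N) (hσ : ‖σ‖ = 1) :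
    wtn N p n (vP N v w σ) ≤ ENNReal.ofReal (2 ^ p) * (wtn N p n v + wtn N p n w) := by
  unfold wtn
  rw [← ENNReal.ofReal_add (by positivity) (by positivity),
    ← ENNReal.ofReal_mul (by positivity)]
  apply ENNReal.ofReal_le_ofReal
  have h := vP_le v w σ hσ
  set A := 1 + ‖v‖ ^ 2 with hA
  set C := 1 + ‖w‖ ^ 2 with hC
  have hn : (0:ℝ) ≤ n := Nat.cast_nonneg n
  have hA0 : 0 ≤ A := by positivity
  have hC0 : 0 ≤ C := by positivity
  have key : ∀ {X Y : ℝ}, 0 ≤ X → 0 ≤ Y → X ≤ Y → 1 + ‖vP N v w σ‖ ^ 2 ≤ X + Y →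
      (min (1 + ‖vP N v w σ‖ ^ 2) (n:ℝ)) ^ p ≤ 2 ^ p * (min X (n:ℝ) ^ p + min Y (n:ℝ) ^ p) := by
    intro X Y hX hY hXY hs
    have h1 : min (1 + ‖vP N v w σ‖ ^ 2) (n:ℝ) ≤ 2 * min Y n := by
      rcases le_total Y n with h' | h'
      · rw [min_eq_left h']
        exact (min_le_left _ _).trans (by linarith)
      · rw [min_eq_right h']
        exact (min_le_right _ _).trans (by linarith)
    have h0 : 0 ≤ min X (n:ℝ) ^ p := by positivity
    calc _ ≤ (2 * min Y (n:ℝ)) ^ p := Real.rpow_le_rpow (by positivity) h1 hp.le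
      _ = 2 ^ p * min Y (n:ℝ) ^ p := Real.mul_rpow (by norm_num) (by positivity)
      _ ≤ _ := by gcongr; linarith
  rcases le_total A C with h' | h'
  · exact key hA0 hC0 h' h
  · rw [add_comm (min A (n:ℝ) ^ p)]
    exact key hC0 hA0 h' (by linarith)

/-- The moment of order `2 p` stays finite, with an exponential bound. The truncated weights give
finite moments, to which the Gronwall lemma applies with a rate independent of the truncation. -/
lemma moment_exp (hN : 2 ≤ N) [IsFiniteMeasure (sphMeas N)] {γ : ℝ} (hK : KernelOK N Φ b γ) (hb : Measurable b)
    {C : ℝ} (hC : ∀ z : Rn N, Φ ‖z‖ ≤ C) {f : ℝ → Rn N → ℝ} {fIn : Rn N → ℝ}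
    (hf : IsSolution N Φ b f fIn) {p : ℝ} (hp : 0 < p) :
    ∃ K : ℝ, 0 < K ∧ ∀ t, 0 ≤ t → ∫⁻ v, wt N p v * ENNReal.ofReal (f t v)
      ≤ 2 * (∫⁻ v, wt N p v * ENNReal.ofReal (fIn v)) * ENNReal.ofReal (Real.exp (2 * K * t)) := by
  have hm := fun t => (hf.meas_slice t).ennreal_ofReal
  set ρ := ∫ v, fIn v with hρ
  set K0 : ℝ≥0∞ := ENNReal.ofReal C * bBar N hN b * ENNReal.ofReal (2 ^ p) * 2 *
    ENNReal.ofReal ρ with hK0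
  have hK0t : K0 ≠ ⊤ := by
    refine ENNReal.mul_ne_top (ENNReal.mul_ne_top (ENNReal.mul_ne_top (ENNReal.mul_ne_top
      ?_ (bBar_lt_top hN hK).ne) ?_) ?_) ?_ <;> simp
  have hwt : ∀ n v, wtn N p n v ≤ wt N p v := fun n v =>
    ENNReal.ofReal_le_ofReal (Real.rpow_le_rpow (by positivity) (min_le_left _ _) hp.le)
  refine ⟨K0.toReal + 1, by positivity, fun t ht => ?_⟩
  have hn : ∀ n, ∫⁻ v, wtn N p n v * ENNReal.ofReal (f t v)
      ≤ 2 * (∫⁻ v, wt N p v * ENNReal.ofReal (fIn v)) *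
        ENNReal.ofReal (Real.exp (2 * (K0.toReal + 1) * t)) := by
    intro n
    refine gronwall_bdd (y := fun t => ∫⁻ v, wtn N p n v * ENNReal.ofReal (f t v))
      (M := ENNReal.ofReal ((n:ℝ) ^ p) * ENNReal.ofReal ρ) (by positivity)
      (ENNReal.mul_ne_top ENNReal.ofReal_ne_top ENNReal.ofReal_ne_top) ?_ ?_ t ht
    · intro t ht
      rw [← hf.lmass ht, ← lintegral_const_mul _ (hm t)]
      refine lintegral_mono fun v => ?_
      gcongr
      exact ENNReal.ofReal_le_ofReal (Real.rpow_le_rpow (by positivity) (min_le_right _ _) hp.le)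
    · intro t ht
      have hw := weak_form hN hK hb hC hf (wtn_meas N p n) ht
      calc _ ≤ (∫⁻ v, wtn N p n v * ENNReal.ofReal (fIn v)) + ∫⁻ τ in Set.Ioc (0:ℝ) t,
            BF N Φ b (fun v => ENNReal.ofReal (f τ v)) (fun v w σ => wtn N p n (vP N v w σ)) := by
            rw [← hw]; exact le_self_add
        _ ≤ _ := by
            refine add_le_add (lintegral_mono fun v => by gcongr; exact hwt n v) ?_
            rw [← lintegral_const_mul' _ _ ENNReal.ofReal_ne_top]
            refine lintegral_mono_ae ?_
            filter_upwards [ae_restrict_mem measurableSet_Ioc] with τ hτ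
            refine (BF_gain_le hN hK hb hC (hm τ) (wtn_meas N p n)
              (fun v w σ hσ => wtn_vP hp n v w σ hσ)).trans ?_
            rw [hf.lmass hτ.1.le]
            calc _ = K0 * ∫⁻ v, wtn N p n v * ENNReal.ofReal (f τ v) := by rw [hK0]; ring
              _ ≤ _ := by
                gcongr
                exact (ENNReal.le_ofReal_iff_toReal_le hK0t (by positivity)).2 (by linarith)
  calc ∫⁻ v, wt N p v * ENNReal.ofReal (f t v)
      = ∫⁻ v, ⨆ n, wtn N p n v * ENNReal.ofReal (f t v) := by
        refine lintegral_congr fun v => le_antisymm ?_ (iSup_le fun n => by gcongr; exact hwt n v)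
        obtain ⟨n, hn⟩ := exists_nat_ge (1 + ‖v‖ ^ 2)
        refine le_iSup_of_le n ?_
        rw [wtn, min_eq_left hn, wt]
    _ = ⨆ n, ∫⁻ v, wtn N p n v * ENNReal.ofReal (f t v) := by
        refine lintegral_iSup (fun n => (wtn_meas N p n).mul (hm t)) ?_
        intro n m hnm v
        refine mul_le_mul_left (ENNReal.ofReal_le_ofReal (Real.rpow_le_rpow (by positivity) ?_ hp.le)) _
        exact min_le_min le_rfl (by exact_mod_cast hnm)
    _ ≤ _ := iSup_le hn

end

/-! ### The moment inequality -/

/-- Indicator of the directions `σ` almost orthogonal to `v + w`. -/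
def slab (N : ℕ) (v w σ : Rn N) : ℝ≥0∞ := if 2 * ⟪v + w, σ⟫ ^ 2 ≤ ‖v + w‖ ^ 2 then 1 else 0

/-- The weight `(2 + |v|² + |w|²) ^ p` of the pair energy. -/
def wt2 (N : ℕ) (p : ℝ) (v w : Rn N) : ℝ≥0∞ := ENNReal.ofReal ((2 + ‖v‖ ^ 2 + ‖w‖ ^ 2) ^ p)

/-- The cross terms of the Povzner inequality. -/
def crossWt (N : ℕ) (p : ℝ) (v w : Rn N) : ℝ≥0∞ :=
  ENNReal.ofReal (2 ^ p) * (wt N (p - 1) v * wt N 1 w + wt N 1 v * wt N (p - 1) w)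

lemma slab_meas (N : ℕ) : Measurable fun q : Rn N × Rn N × Rn N => slab N q.1 q.2.1 q.2.2 := by
  unfold slab
  exact Measurable.ite (measurableSet_le (by fun_prop) (by fun_prop)) measurable_const
    measurable_const

/-- Povzner inequality for the weights. -/
lemma povzner_wt {N : ℕ} {p : ℝ} (hp : 1 < p) (v w σ : Rn N) (hσ : ‖σ‖ = 1) :
    wt N p (vP N v w σ) + wt N p (vSP N v w σ)
        + slab N v w σ * (ENNReal.ofReal (1 - (7 / 8) ^ (p - 1)) * wt2 N p v w)
      ≤ wt N p v + wt N p w + crossWt N p v w := by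
  obtain ⟨h1, h2⟩ := norm_vP_sq v w σ hσ
  have hk : (7 / 8 : ℝ) ^ (p - 1) ≤ 1 :=
    Real.rpow_le_one (by norm_num) (by norm_num) (by linarith)
  have hsum : (1 + ‖vP N v w σ‖ ^ 2) + (1 + ‖vSP N v w σ‖ ^ 2)
      = (1 + ‖v‖ ^ 2) + (1 + ‖w‖ ^ 2) := by rw [h1, h2]; ring
  obtain ⟨q1, q2⟩ := povzner hp (by positivity : 0 < 1 + ‖vP N v w σ‖ ^ 2)
    (by positivity : 0 < 1 + ‖vSP N v w σ‖ ^ 2) (by positivity : 0 < 1 + ‖v‖ ^ 2)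
    (by positivity : 0 < 1 + ‖w‖ ^ 2) hsum
  have hS : (1 + ‖v‖ ^ 2) + (1 + ‖w‖ ^ 2) = 2 + ‖v‖ ^ 2 + ‖w‖ ^ 2 := by ring
  rw [hS] at q2
  have hR : wt N p v + wt N p w + crossWt N p v w = ENNReal.ofReal ((1 + ‖v‖ ^ 2) ^ p +
      (1 + ‖w‖ ^ 2) ^ p + 2 ^ p * ((1 + ‖w‖ ^ 2) * (1 + ‖v‖ ^ 2) ^ (p - 1) +
        (1 + ‖v‖ ^ 2) * (1 + ‖w‖ ^ 2) ^ (p - 1))) := by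
    unfold wt crossWt wt
    rw [ENNReal.ofReal_add (by positivity) (by positivity),
      ENNReal.ofReal_add (by positivity) (by positivity), ENNReal.ofReal_mul (by positivity),
      ENNReal.ofReal_add (by positivity) (by positivity), ENNReal.ofReal_mul (by positivity),
      ENNReal.ofReal_mul (by positivity), Real.rpow_one, Real.rpow_one]
    ring
  rw [hR]
  unfold slab wt2 wt
  split_ifs with h
  · obtain ⟨s1, s2⟩ := slab_share v w σ hσ h
    rw [one_mul, ← ENNReal.ofReal_mul (by linarith),
      ← ENNReal.ofReal_add (by positivity) (by positivity),
      ← ENNReal.ofReal_add (by positivity) (mul_nonneg (by linarith) (by positivity))]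
    exact ENNReal.ofReal_le_ofReal (q2 s1 s2)
  · rw [zero_mul, add_zero, ← ENNReal.ofReal_add (by positivity) (by positivity)]
    exact ENNReal.ofReal_le_ofReal q1

section

variable {N : ℕ} {Φ b : ℝ → ℝ} {F : Rn N → ℝ≥0∞}

/-- The Povzner inequality integrated against the collision measure, after exchanging the roles
of the two particles. -/
lemma sym_ineq [IsFiniteMeasure (sphMeas N)] (hΦ : Measurable Φ) (hb : Measurable b)
    (hF : Measurable F) {p : ℝ} (hp : 1 < p) :
    2 * BF N Φ b F (fun v w σ => wt N p (vP N v w σ)) + BF N Φ b F (fun v w σ =>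
        slab N v w σ * (ENNReal.ofReal (1 - (7 / 8) ^ (p - 1)) * wt2 N p v w))
      ≤ 2 * BF N Φ b F (fun v _ _ => wt N p v) + BF N Φ b F (fun v w _ => crossWt N p v w) := by
  have mP : Measurable fun q : Rn N × Rn N × Rn N => wt N p (vP N q.1 q.2.1 q.2.2) :=
    (wt_meas N p).comp (by unfold vP; fun_prop)
  have mSP : Measurable fun q : Rn N × Rn N × Rn N => wt N p (vSP N q.1 q.2.1 q.2.2) :=
    (wt_meas N p).comp (by unfold vSP; fun_prop)
  have mV : Measurable fun q : Rn N × Rn N × Rn N => wt N p q.1 := by fun_prop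
  have mW : Measurable fun q : Rn N × Rn N × Rn N => wt N p q.2.1 := by fun_prop
  have e1 := BF_swap hΦ hb hF (ψ := fun v w σ => wt N p (vP N v w σ)) mP
  simp_rw [vP_swap] at e1
  have e2 := BF_swap hΦ hb hF (ψ := fun v _ _ => wt N p v) mV
  calc _ = BF N Φ b F (fun v w σ => wt N p (vP N v w σ) + wt N p (vSP N v w σ)
        + slab N v w σ * (ENNReal.ofReal (1 - (7 / 8) ^ (p - 1)) * wt2 N p v w)) := by
        rw [BF_add hΦ hb hF (ψ := fun v w σ => wt N p (vP N v w σ) + wt N p (vSP N v w σ))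
          (mP.add mSP), BF_add hΦ hb hF (ψ := fun v w σ => wt N p (vP N v w σ)) mP, ← e1, two_mul]
    _ ≤ BF N Φ b F (fun v w σ => wt N p v + wt N p w + crossWt N p v w) :=
        BF_mono fun v w σ hσ => povzner_wt hp v w σ hσ
    _ = _ := by
        rw [BF_add hΦ hb hF (ψ := fun v w σ => wt N p v + wt N p w) (mV.add mW),
          BF_add hΦ hb hF (ψ := fun v w σ => wt N p v) mV, ← e2, two_mul]

lemma cross_le (hN : 2 ≤ N) {γ : ℝ} (hK : KernelOK N Φ b γ) (hb : Measurable b) {C : ℝ}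
    (hC : ∀ z : Rn N, Φ ‖z‖ ≤ C) (hF : Measurable F) (p : ℝ) :
    BF N Φ b F (fun v w _ => crossWt N p v w)
      ≤ ENNReal.ofReal C * bBar N hN b * ENNReal.ofReal (2 ^ p) * 2 *
        ((∫⁻ v, wt N 1 v * F v) * ∫⁻ v, wt N (p - 1) v * F v) := by
  refine (BF_le hN hK hb hC F _ (fun v w => crossWt N p v w) fun _ _ _ _ => le_rfl).trans ?_
  have := lintegral_pair_add (ENNReal.ofReal C * bBar N hN b * ENNReal.ofReal (2 ^ p))
    (p := fun v => wt N (p - 1) v * F v) (q := fun v => wt N 1 v * F v)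
    (r := fun v => wt N 1 v * F v) (s := fun v => wt N (p - 1) v * F v)
    (by fun_prop) (by fun_prop) (by fun_prop) (by fun_prop)
  calc _ = ∫⁻ v, ∫⁻ w, ENNReal.ofReal C * bBar N hN b * ENNReal.ofReal (2 ^ p) *
        (wt N (p - 1) v * F v * (wt N 1 w * F w) + wt N 1 v * F v * (wt N (p - 1) w * F w)) :=
        lintegral_congr fun v => lintegral_congr fun w => by unfold crossWt; ring
    _ ≤ _ := by rw [this]; apply le_of_eq; ring

/-- Lower bound of the dissipated term: the slab has a fixed proportion of the sphere, and the
kinetic factor is bounded below by a product of weights. -/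
lemma slab_ge (hN : 2 ≤ N) {γ : ℝ} (hK : KernelOK N Φ b γ) {c b0 : ℝ}
    (hc : 0 < c) (hcΦ : ∀ z : Rn N, c * (1 + ‖z‖) ^ γ ≤ Φ ‖z‖) (hb0 : 0 < b0)
    (hbb : ∀ x, b0 ≤ b x) (hF : Measurable F) {p : ℝ} (hp : 1 < p) (k : ℝ≥0∞) :
    sphMeas N Set.univ / N * (k * ENNReal.ofReal (c * b0)) *
        ((∫⁻ v, lw N γ v * wt N p v * F v) * ∫⁻ v, lw N γ v * F v)
      ≤ BF N Φ b F (fun v w σ => slab N v w σ * (k * wt2 N p v w)) := by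
  rw [← lintegral_pair _ (fun v => lw N γ v * wt N p v * F v) (fun v => lw N γ v * F v)
    (by fun_prop) (by fun_prop)]
  unfold BF I3
  refine lintegral_mono fun v => lintegral_mono fun w => ?_
  have hkE : ∀ σ, ENNReal.ofReal (c * b0) * (lw N γ v * lw N γ w) ≤ kE N Φ b v w σ := fun σ => by
    unfold lw kE
    rw [← ENNReal.ofReal_mul (by positivity), ← ENNReal.ofReal_mul (by positivity)]
    apply ENNReal.ofReal_le_ofReal
    calc c * b0 * ((1 + ‖v‖) ^ γ * (1 + ‖w‖) ^ γ)
        = c * ((1 + ‖v‖) * (1 + ‖w‖)) ^ γ * b0 := by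
          rw [Real.mul_rpow (by positivity) (by positivity)]; ring
      _ ≤ c * (1 + ‖v - w‖) ^ γ * b0 := by
          gcongr c * ?_ * b0
          refine Real.rpow_le_rpow_of_nonpos (by positivity) ?_ hK.gamma_mem.2
          nlinarith [norm_sub_le v w, norm_nonneg v, norm_nonneg w,
            mul_nonneg (norm_nonneg v) (norm_nonneg w)]
      _ ≤ _ := mul_le_mul (hcΦ _) (hbb _) hb0.le (phi_pos hK _)
  have hwt : wt N p v ≤ wt2 N p v w := by
    refine ENNReal.ofReal_le_ofReal (Real.rpow_le_rpow (by positivity) ?_ (by linarith))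
    nlinarith [sq_nonneg ‖w‖]
  have hms : MeasurableSet {σ : Rn N | 2 * ⟪v + w, σ⟫ ^ 2 ≤ ‖v + w‖ ^ 2} :=
    measurableSet_le (by fun_prop) (by fun_prop)
  have hslab : ∀ σ, slab N v w σ
      = {σ : Rn N | 2 * ⟪v + w, σ⟫ ^ 2 ≤ ‖v + w‖ ^ 2}.indicator (fun _ => 1) σ := fun σ => by
    unfold slab Set.indicator
    rfl
  have hmeas : sphMeas N Set.univ / N
      ≤ sphMeas N {σ : Rn N | 2 * ⟪v + w, σ⟫ ^ 2 ≤ ‖v + w‖ ^ 2} :=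
    ENNReal.div_le_of_le_mul' (sphMeas_slab hN (v + w))
  calc _ ≤ sphMeas N {σ : Rn N | 2 * ⟪v + w, σ⟫ ^ 2 ≤ ‖v + w‖ ^ 2} *
        (k * wt2 N p v w * (ENNReal.ofReal (c * b0) * (lw N γ v * lw N γ w) * (F w * F v))) := by
        calc _ = sphMeas N Set.univ / N * (k * wt N p v *
              (ENNReal.ofReal (c * b0) * (lw N γ v * lw N γ w) * (F w * F v))) := by ring
          _ ≤ _ := by gcongr
    _ = ∫⁻ σ, slab N v w σ * (k * wt2 N p v w *
        (ENNReal.ofReal (c * b0) * (lw N γ v * lw N γ w) * (F w * F v))) ∂(sphMeas N) := by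
        simp_rw [hslab]
        rw [lintegral_mul_const _ (measurable_const.indicator hms), lintegral_indicator_const hms,
          one_mul]
    _ ≤ _ := by
        refine lintegral_mono fun σ => ?_
        dsimp only
        rw [mul_assoc (slab N v w σ)]
        gcongr
        exact hkE σ

/-- The gain of the moment is at most its loss plus a constant, uniformly over densities `F` of
given mass whose integral against `1 + |v|²` is at most `J`. -/
lemma key_estimate (hN : 2 ≤ N) [IsFiniteMeasure (sphMeas N)] {γ : ℝ} (hK : KernelOK N Φ b γ)
    (hb : Measurable b) {p : ℝ} (hp : 1 < p) {ρ J : ℝ} (hρ : 0 < ρ) (hJ : 0 < J) :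
    ∃ C₂ : ℝ, 0 ≤ C₂ ∧ ∀ F : Rn N → ℝ≥0∞, Measurable F → ∫⁻ v, F v = ENNReal.ofReal ρ →
      ∫⁻ v, wt N 1 v * F v ≤ ENNReal.ofReal J → ∫⁻ v, wt N p v * F v ≠ ⊤ →
      BF N Φ b F (fun v w σ => wt N p (vP N v w σ))
        ≤ BF N Φ b F (fun v _ _ => wt N p v) + ENNReal.ofReal C₂ := by
  have hΦm : Measurable Φ := hK.phi_smooth.continuous.measurable
  obtain ⟨c, C, hc, hC, hcC⟩ := hK.phi_bounds
  obtain ⟨b0, hb0, hbb⟩ := hK.b_pos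
  by_cases hs : sphMeas N Set.univ = 0
  · refine ⟨0, le_rfl, fun F _ _ _ _ => ?_⟩
    rw [Measure.measure_univ_eq_zero] at hs
    simp [BF, I3, hs]
  have hCz : ∀ z : Rn N, Φ ‖z‖ ≤ C := fun z => (hcC z).2.trans
    (mul_le_of_le_one_right hC.le (Real.rpow_le_one_of_one_le_of_nonpos
      (by linarith [norm_nonneg z]) hK.gamma_mem.2))
  have hk : 0 < 1 - (7 / 8 : ℝ) ^ (p - 1) := by
    have := Real.rpow_lt_one (by norm_num) (by norm_num) (by linarith : 0 < p - 1)
      (x := (7 / 8 : ℝ))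
    linarith
  set k : ℝ≥0∞ := ENNReal.ofReal (1 - (7 / 8 : ℝ) ^ (p - 1)) with hkdef
  set l0 : ℝ≥0∞ := sphMeas N Set.univ / N * (k * ENNReal.ofReal (c * b0)) with hl0
  have hN0 : (N : ℝ≥0∞) ≠ 0 := by simp; omega
  have hl0t : l0 ≠ ⊤ := ENNReal.mul_ne_top (ENNReal.div_lt_top (measure_lt_top _ _).ne hN0).ne
    (ENNReal.mul_ne_top ENNReal.ofReal_ne_top ENNReal.ofReal_ne_top)
  have hl00 : l0 ≠ 0 := by
    refine mul_ne_zero (ENNReal.div_pos hs (ENNReal.natCast_ne_top N)).ne'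
      (mul_ne_zero ?_ ?_)
    · exact (ENNReal.ofReal_pos.2 hk).ne'
    · exact (ENNReal.ofReal_pos.2 (by positivity)).ne'
  set l : ℝ := l0.toReal with hl
  have hlpos : 0 < l := ENNReal.toReal_pos hl00 hl0t
  set K0 : ℝ≥0∞ := ENNReal.ofReal C * bBar N hN b * ENNReal.ofReal (2 ^ p) * 2 with hK0
  have hK0t : K0 ≠ ⊤ := ENNReal.mul_ne_top (ENNReal.mul_ne_top (ENNReal.mul_ne_top
      ENNReal.ofReal_ne_top (bBar_lt_top hN hK).ne) ENNReal.ofReal_ne_top) (by simp)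
  set K1 : ℝ := K0.toReal with hK1
  have hK1n : 0 ≤ K1 := ENNReal.toReal_nonneg
  -- lower bound for the mass weighted by the kinetic factor
  set η : ℝ := ρ ^ 2 / (2 * J) with hη
  have hηpos : 0 < η := by positivity
  set ε : ℝ := l * η / (K1 * J + 1) with hε
  obtain ⟨D, hD, hint⟩ := interpolate (ε := ε) hp hK.gamma_mem (by positivity)
  refine ⟨K1 * (J * (D * ρ)), by positivity, fun F hF hmass hen hfin => ?_⟩
  set Z := ∫⁻ v, lw N γ v * wt N p v * F v with hZ
  have hZt : Z ≠ ⊤ := by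
    refine ne_top_of_le_ne_top hfin (lintegral_mono fun v => ?_)
    have : lw N γ v ≤ 1 := by
      rw [← ENNReal.ofReal_one]
      exact ENNReal.ofReal_le_ofReal (Real.rpow_le_one_of_one_le_of_nonpos
        (by linarith [norm_nonneg v]) hK.gamma_mem.2)
    calc _ ≤ 1 * wt N p v * F v := by gcongr
      _ = _ := by rw [one_mul]
  have hlow : ENNReal.ofReal η ≤ ∫⁻ v, lw N γ v * F v := by
    have hT : 0 < J / ρ := by positivity
    have h1 : ENNReal.ofReal (1 / (J / ρ)) * ENNReal.ofReal ρ
        ≤ (∫⁻ v, lw N γ v * F v) + ENNReal.ofReal (1 / (2 * (J / ρ) ^ 2)) * ENNReal.ofReal J := by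
      calc _ = ∫⁻ v, ENNReal.ofReal (1 / (J / ρ)) * F v := by
            rw [lintegral_const_mul _ hF, hmass]
        _ ≤ ∫⁻ v, (lw N γ v * F v + ENNReal.ofReal (1 / (2 * (J / ρ) ^ 2)) *
              (wt N 1 v * F v)) := by
            refine lintegral_mono fun v => ?_
            dsimp only
            rw [← mul_assoc, ← add_mul]
            gcongr
            unfold lw wt
            rw [← ENNReal.ofReal_mul (by positivity),
              ← ENNReal.ofReal_add (by positivity) (by positivity), Real.rpow_one]
            apply ENNReal.ofReal_le_ofReal
            refine (low_weight hK.gamma_mem hT (norm_nonneg v)).trans (le_of_eq ?_)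
            ring
        _ = (∫⁻ v, lw N γ v * F v) + ENNReal.ofReal (1 / (2 * (J / ρ) ^ 2)) *
              ∫⁻ v, wt N 1 v * F v := by
            have q : Measurable fun v => lw N γ v * F v := by fun_prop
            rw [lintegral_add_left q, lintegral_const_mul' _ _ ENNReal.ofReal_ne_top]
        _ ≤ _ := by gcongr
    rw [← ENNReal.ofReal_mul (by positivity), ← ENNReal.ofReal_mul (by positivity),
      show 1 / (J / ρ) * ρ = η + 1 / (2 * (J / ρ) ^ 2) * J by rw [hη]; field_simp; ring,
      ENNReal.ofReal_add hηpos.le (by positivity)] at h1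
    exact (ENNReal.add_le_add_iff_right ENNReal.ofReal_ne_top).1 h1
  have hp1 : ∫⁻ v, wt N (p - 1) v * F v
      ≤ ENNReal.ofReal ε * Z + ENNReal.ofReal D * ENNReal.ofReal ρ := by
    calc _ ≤ ∫⁻ v, (ENNReal.ofReal ε * (lw N γ v * wt N p v * F v)
          + ENNReal.ofReal D * F v) := by
          refine lintegral_mono fun v => ?_
          dsimp only
          rw [← mul_assoc, ← add_mul]
          gcongr
          unfold lw wt
          rw [← ENNReal.ofReal_mul (by positivity), ← ENNReal.ofReal_mul (by positivity),
            ← ENNReal.ofReal_add (by positivity) (by positivity)]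
          exact ENNReal.ofReal_le_ofReal (hint _ (norm_nonneg v))
      _ = _ := by
          have q : Measurable fun v => ENNReal.ofReal D * F v := by fun_prop
          rw [lintegral_add_right _ q, lintegral_const_mul' _ _ ENNReal.ofReal_ne_top,
            lintegral_const_mul' _ _ ENNReal.ofReal_ne_top, hmass]
  have hsym := sym_ineq hΦm hb hF hp
  have hslab := slab_ge hN hK hc (fun z => (hcC z).1) hb0 hbb hF hp k
  have hcross := cross_le hN hK hb hCz hF p
  set G := BF N Φ b F (fun v w σ => wt N p (vP N v w σ)) with hG
  set L := BF N Φ b F (fun v _ _ => wt N p v) with hL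
  have hD1 : ENNReal.ofReal (l * η) * Z
      ≤ BF N Φ b F (fun v w σ => slab N v w σ * (k * wt2 N p v w)) := by
    refine le_trans ?_ hslab
    rw [← hl0, ENNReal.ofReal_mul hlpos.le, hl, ENNReal.ofReal_toReal hl0t, mul_assoc, mul_comm Z]
    gcongr
  have hE1 : BF N Φ b F (fun v w _ => crossWt N p v w)
      ≤ ENNReal.ofReal (l * η) * Z + ENNReal.ofReal (K1 * (J * (D * ρ))) := by
    calc _ ≤ ENNReal.ofReal K1 * (ENNReal.ofReal J *
          (ENNReal.ofReal ε * Z + ENNReal.ofReal D * ENNReal.ofReal ρ)) := by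
          rw [hK1, ENNReal.ofReal_toReal hK0t]
          refine hcross.trans ?_
          gcongr
      _ = ENNReal.ofReal (K1 * (J * ε)) * Z + ENNReal.ofReal (K1 * (J * (D * ρ))) := by
          rw [ENNReal.ofReal_mul hK1n, ENNReal.ofReal_mul hJ.le, ENNReal.ofReal_mul hK1n,
            ENNReal.ofReal_mul hJ.le, ENNReal.ofReal_mul hD]
          ring
      _ ≤ _ := by
          have hle : K1 * (J * ε) ≤ l * η := by
            have hpos : 0 < K1 * J + 1 := by positivity
            rw [hε, ← mul_assoc, mul_div_assoc', div_le_iff₀ hpos]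
            nlinarith [mul_pos hlpos hηpos]
          exact add_le_add (mul_le_mul_left (ENNReal.ofReal_le_ofReal hle) _) le_rfl
  have h2 : 2 * G ≤ 2 * L + ENNReal.ofReal (K1 * (J * (D * ρ))) := by
    have hcancel : ENNReal.ofReal (l * η) * Z ≠ ⊤ := ENNReal.mul_ne_top ENNReal.ofReal_ne_top hZt
    refine (ENNReal.add_le_add_iff_right hcancel).1 ?_
    calc _ ≤ 2 * L + BF N Φ b F (fun v w _ => crossWt N p v w) :=
          (add_le_add le_rfl hD1).trans hsym
      _ ≤ 2 * L + (ENNReal.ofReal (l * η) * Z + ENNReal.ofReal (K1 * (J * (D * ρ)))) :=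
          add_le_add le_rfl hE1
      _ = _ := by ring
  refine (ENNReal.mul_le_mul_iff_right (two_ne_zero) (by simp : (2:ℝ≥0∞) ≠ ⊤)).1 ?_
  rw [mul_add]
  refine h2.trans (add_le_add le_rfl ?_)
  rw [two_mul]
  exact le_self_add

end

/-! ### Linear growth -/

lemma L1s_eq {N : ℕ} {s : ℝ} {g : Rn N → ℝ} (hg : ∀ v, 0 ≤ g v) :
    L1s N s g = ∫⁻ v, wt N (s / 2) v * ENNReal.ofReal (g v) := by
  unfold L1s wt
  refine lintegral_congr fun v => ?_
  rw [abs_of_nonneg (hg v), ENNReal.ofReal_mul (hg v), mul_comm]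

/-- Conservation of mass and energy, as an identity for the quadratic weight. -/
lemma IsSolution.energy_eq {N : ℕ} {Φ b : ℝ → ℝ} {f : ℝ → Rn N → ℝ} {fIn : Rn N → ℝ}
    (hf : IsSolution N Φ b f fIn) {t : ℝ} (ht : 0 ≤ t) :
    ∫⁻ v, wt N 1 v * ENNReal.ofReal (f t v) = ∫⁻ v, wt N 1 v * ENNReal.ofReal (fIn v) := by
  have key : ∀ {t : ℝ}, 0 ≤ t → ∫⁻ v, wt N 1 v * ENNReal.ofReal (f t v)
      = ENNReal.ofReal ((∫ v, fIn v) + ∫ v, fIn v * ‖v‖ ^ 2) := fun {t} ht => by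
    obtain ⟨i1, i2⟩ := hf.integrable ht
    have i : Integrable fun v => f t v + f t v * ‖v‖ ^ 2 := i1.add i2
    rw [← hf.mass t ht, ← hf.energy t ht, ← integral_add i1 i2,
      ofReal_integral_eq_lintegral_ofReal i (Filter.Eventually.of_forall fun v =>
        add_nonneg (hf.nonneg t v) (mul_nonneg (hf.nonneg t v) (sq_nonneg _)))]
    refine lintegral_congr fun v => ?_
    rw [wt, Real.rpow_one, ← ENNReal.ofReal_mul (by positivity)]
    congr 1
    ring
  rw [key ht, ← key le_rfl, hf.initial]

/-- **Proposition 2.1** (linear growth of moments): for `s > 2` and an initial datum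
`f_in ∈ L¹_s`, the `L¹_s` norm of the solution grows at most linearly in time, with a
constant depending only on the dimension, the kernel, the mass `ρ` and the `L¹_s` norm
bound `J` of the initial datum. -/
theorem linear_moment_growth
    (N : ℕ) (hN : 2 ≤ N) (s : ℝ) (hs : 2 < s)
    (Φ b : ℝ → ℝ) (γ : ℝ) (hK : KernelOK N Φ b γ) (ρ J : ℝ) :
    ∃ C₀ : ℝ, 0 < C₀ ∧
      ∀ (fIn : Rn N → ℝ) (f : ℝ → Rn N → ℝ),
        (∀ v, 0 ≤ fIn v) → (∫ v : Rn N, fIn v) = ρ →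
        L1s N s fIn ≤ ENNReal.ofReal J →
        IsSolution N Φ b f fIn →
        ∀ t : ℝ, 0 ≤ t → L1s N s (f t) ≤ ENNReal.ofReal (C₀ * (1 + t)) := by
  obtain ⟨b', hb', hK', hQ⟩ := exists_borel_kernel hN hK
  have : IsFiniteMeasure (sphMeas N) := sphMeas_finite hN hK
  obtain ⟨c, C, hc, hC, hcC⟩ := hK.phi_bounds
  have hCz : ∀ z : Rn N, Φ ‖z‖ ≤ C := fun z => (hcC z).2.trans
    (mul_le_of_le_one_right hC.le (Real.rpow_le_one_of_one_le_of_nonpos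
      (by linarith [norm_nonneg z]) hK.gamma_mem.2))
  have hp : 1 < s / 2 := by linarith
  rcases le_or_gt ρ 0 with hρ | hρ
  · -- without mass the solution vanishes almost everywhere
    refine ⟨1, one_pos, fun fIn f hpos hmass hJ hf t ht => ?_⟩
    have h0 := hf.lmass ht
    rw [hmass, ENNReal.ofReal_of_nonpos hρ,
      lintegral_eq_zero_iff (hf.meas_slice t).ennreal_ofReal] at h0
    rw [L1s_eq (hf.nonneg t)]
    have : ∫⁻ v, wt N (s / 2) v * ENNReal.ofReal (f t v) = ∫⁻ _ : Rn N, 0 := by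
      refine lintegral_congr_ae ?_
      filter_upwards [h0] with v hv
      rw [hv]
      simp
    rw [this]
    simp
  set J' : ℝ := max J 1 with hJ'
  have hJ1 : 0 < J' := lt_of_lt_of_le one_pos (le_max_right _ _)
  obtain ⟨C₂, hC₂, hkey⟩ := key_estimate hN hK' hb' hp hρ hJ1
  refine ⟨J' + C₂, by positivity, fun fIn f hpos hmass hJ hf t ht => ?_⟩
  replace hf := hf.congr hQ
  have hm := fun t => (hf.meas_slice t).ennreal_ofReal
  rw [L1s_eq hpos] at hJ
  rw [L1s_eq (hf.nonneg t)]
  replace hJ := hJ.trans (ENNReal.ofReal_le_ofReal (le_max_left J 1))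
  rw [← hJ'] at hJ
  have hen : ∀ τ, 0 ≤ τ → ∫⁻ v, wt N 1 v * ENNReal.ofReal (f τ v) ≤ ENNReal.ofReal J' := by
    intro τ hτ
    rw [hf.energy_eq hτ]
    refine le_trans (lintegral_mono fun v => ?_) hJ
    gcongr
    refine ENNReal.ofReal_le_ofReal (Real.rpow_le_rpow_of_exponent_le ?_ hp.le)
    nlinarith [sq_nonneg ‖v‖]
  obtain ⟨K, hK0, hexp⟩ := moment_exp hN hK' hb' hCz hf (by linarith : 0 < s / 2)
  -- crude bound of the moment on `[0, t]`
  set M : ℝ≥0∞ := 2 * ENNReal.ofReal J' * ENNReal.ofReal (Real.exp (2 * K * t)) with hM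
  have hMt : M ≠ ⊤ := ENNReal.mul_ne_top (ENNReal.mul_ne_top (by simp) ENNReal.ofReal_ne_top)
    ENNReal.ofReal_ne_top
  have hMb : ∀ τ, 0 ≤ τ → τ ≤ t → ∫⁻ v, wt N (s / 2) v * ENNReal.ofReal (f τ v) ≤ M := by
    intro τ h0 h1
    refine (hexp τ h0).trans ?_
    rw [hM]
    gcongr
  have hw := weak_form hN hK' hb' hCz hf (wt_meas N (s / 2)) ht
  set L : ℝ → ℝ≥0∞ := fun τ => BF N Φ b' (fun v => ENNReal.ofReal (f τ v))
    (fun v _ _ => wt N (s / 2) v) with hL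
  have hLt : ∫⁻ τ in Set.Ioc (0:ℝ) t, L τ ≠ ⊤ := by
    refine ne_top_of_le_ne_top (b := ∫⁻ _ in Set.Ioc (0:ℝ) t,
      ENNReal.ofReal C * bBar N hN b' * (M * ENNReal.ofReal ρ)) ?_ ?_
    · rw [lintegral_const]
      refine ENNReal.mul_ne_top (ENNReal.mul_ne_top (ENNReal.mul_ne_top ENNReal.ofReal_ne_top
        (bBar_lt_top hN hK').ne) (ENNReal.mul_ne_top hMt ENNReal.ofReal_ne_top)) ?_
      simp
    · refine lintegral_mono_ae ?_
      filter_upwards [ae_restrict_mem measurableSet_Ioc] with τ hτ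
      refine (BF_loss_le hN hK' hb' hCz (hm τ) (wt_meas N (s / 2))).trans ?_
      rw [hf.lmass hτ.1.le, hmass]
      gcongr
      exact hMb τ hτ.1.le hτ.2
  have hG : ∫⁻ τ in Set.Ioc (0:ℝ) t, BF N Φ b' (fun v => ENNReal.ofReal (f τ v))
        (fun v w σ => wt N (s / 2) (vP N v w σ))
      ≤ (∫⁻ τ in Set.Ioc (0:ℝ) t, L τ) + ENNReal.ofReal (C₂ * t) := by
    calc _ ≤ ∫⁻ τ in Set.Ioc (0:ℝ) t, (L τ + ENNReal.ofReal C₂) := by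
          refine lintegral_mono_ae ?_
          filter_upwards [ae_restrict_mem measurableSet_Ioc] with τ hτ
          exact hkey _ (hm τ) (by rw [hf.lmass hτ.1.le, hmass]) (hen τ hτ.1.le)
            (ne_top_of_le_ne_top hMt (hMb τ hτ.1.le hτ.2))
      _ = _ := by
          rw [lintegral_add_right _ measurable_const, lintegral_const]
          simp [ENNReal.ofReal_mul hC₂]
  refine (ENNReal.add_le_add_iff_right hLt).1 ?_
  rw [hw]
  calc _ ≤ ENNReal.ofReal J' +
        ((∫⁻ τ in Set.Ioc (0:ℝ) t, L τ) + ENNReal.ofReal (C₂ * t)) := add_le_add hJ hG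
    _ = ENNReal.ofReal (J' + C₂ * t) + ∫⁻ τ in Set.Ioc (0:ℝ) t, L τ := by
        rw [ENNReal.ofReal_add hJ1.le (by positivity)]
        ring
    _ ≤ _ := by
        gcongr
        nlinarith
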